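/- Let C be a clutter with edge ideal I(C) in the polynomial ring R = K[x_1,...,x_n] over a field K. If ht(I(C)) = 1, then reg(R/I(C)) = pd(R/I_c(C)) - 1, where I_c(C) is the ideal of vertex covers (Alexander dual) of I(C), reg denotes Castelnuovo-Mumford regularity, and pd denotes projective dimension over R. -/

import Mathlib

open MvPolynomial

/-- A clutter on the vertex set `Fin n`: a family of edges, none containing another. -/
structure Clutter (n : ℕ) : Type where
  edges : Finset (Finset (Fin n))
  antichain : ∀ e ∈ edges, ∀ f ∈ edges, e ⊆ f → e = f

/-- The squarefree monomial `∏_{i ∈ e} xᵢ` associated to a set of vertices. -/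
noncomputable def edgeMonomial (K : Type) [Field K] {n : ℕ} (e : Finset (Fin n)) :
    MvPolynomial (Fin n) K :=
  ∏ i ∈ e, X i

/-- The edge ideal of a clutter. -/
noncomputable def Clutter.edgeIdeal (K : Type) [Field K] {n : ℕ} (C : Clutter n) :
    Ideal (MvPolynomial (Fin n) K) :=
  Ideal.span (edgeMonomial K '' ↑C.edges)

/-- A vertex cover of a clutter: a set of vertices meeting every edge. -/
def Clutter.IsVertexCover {n : ℕ} (C : Clutter n) (S : Finset (Fin n)) : Prop :=
  ∀ e ∈ C.edges, ∃ i ∈ e, i ∈ S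

/-- The ideal of vertex covers (Alexander dual) of a clutter. -/
noncomputable def Clutter.coverIdeal (K : Type) [Field K] {n : ℕ} (C : Clutter n) :
    Ideal (MvPolynomial (Fin n) K) :=
  Ideal.span (edgeMonomial K '' {S : Finset (Fin n) | C.IsVertexCover S})

/-- A finite graded free resolution of `R/I`, where `R = K[x₁,…,xₙ]`.
`F_i = ⊕_j R(-tw i j)` with `rk i` summands, differentials `δ i : F_{i+1} → F_i`
given by matrices with homogeneous entries of the correct degrees, exact, and
augmented by a degree-preserving surjection `F₀ → R/I`. -/
structure GFR (n : ℕ) (K : Type) [Field K] (I : Ideal (MvPolynomial (Fin n) K)) : Type where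
  len : ℕ
  rk : ℕ → ℕ
  rk_zero : ∀ i, len < i → rk i = 0
  tw : (i : ℕ) → Fin (rk i) → ℕ
  δ : (i : ℕ) → ((Fin (rk (i + 1)) → MvPolynomial (Fin n) K) →ₗ[MvPolynomial (Fin n) K]
        (Fin (rk i) → MvPolynomial (Fin n) K))
  δ_homog : ∀ (i : ℕ) (k : Fin (rk (i + 1))) (j : Fin (rk i)),
      δ i (Pi.single k 1) j = 0 ∨
        (tw i j ≤ tw (i + 1) k ∧ (δ i (Pi.single k 1) j).IsHomogeneous (tw (i + 1) k - tw i j))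
  aug : (Fin (rk 0) → MvPolynomial (Fin n) K) →ₗ[MvPolynomial (Fin n) K] MvPolynomial (Fin n) K
  aug_homog : ∀ j : Fin (rk 0), (aug (Pi.single j 1)).IsHomogeneous (tw 0 j)
  aug_surj : ∀ r : MvPolynomial (Fin n) K, ∃ x, r - aug x ∈ I
  exact_zero : LinearMap.range (δ 0) = Submodule.comap aug I
  exact_succ : ∀ i : ℕ, LinearMap.range (δ (i + 1)) = LinearMap.ker (δ i)

/-- The Castelnuovo–Mumford regularity of `R/I`:
the least `r` such that `R/I` admits a (finite) graded free resolution all of whose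
`i`-th twists are at most `r + i`.  (This value is attained by the minimal graded free
resolution, so it equals `max { j - i : b_{ij}(R/I) ≠ 0 }`.) -/
noncomputable def regR {n : ℕ} {K : Type} [Field K] (I : Ideal (MvPolynomial (Fin n) K)) : ℕ :=
  sInf { r : ℕ | ∃ F : GFR n K I, ∀ (i : ℕ) (j : Fin (F.rk i)), F.tw i j ≤ r + i }

/-- The projective dimension of `R/I` over `R = K[x₁,…,xₙ]`: the least possible length of
a (finite, graded) free resolution of `R/I`. -/
noncomputable def pdR {n : ℕ} {K : Type} [Field K] (I : Ideal (MvPolynomial (Fin n) K)) : ℕ :=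
  sInf { d : ℕ | ∃ F : GFR n K I, ∀ i : ℕ, d < i → F.rk i = 0 }

/-- The height of an ideal: the infimum of the heights of the primes containing it
(in the prime spectrum, ordered by inclusion). -/
noncomputable def idealHeight {A : Type} [CommRing A] (I : Ideal A) : WithTop ℕ :=
  ⨅ (p : PrimeSpectrum A) (_ : I ≤ p.asIdeal), Order.height p

/-!
Let `I` be a proper nonzero squarefree monomial ideal in the variables `V`, graded by the subsets
`σ ⊆ V`. Its minimal resolution is governed by the cohomology of the cube `2^V` with coefficients in
`I`, whose value on the cell `σ` is the component of `I` of degree `σ`: minimal generators of degree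
`σ` are classes of top degree `#σ` on the subcube `2^σ`, and passing to the relations between them
shifts the cohomology by one, because free modules are acyclic below the top degree. So the `i`-th
syzygies have a minimal generator of degree `σ` exactly when the cohomology of `2^σ` does not vanish
in degree `#σ - i`. Since every graded free resolution of `R/I` contains all twists of the minimal
one, this determines `reg` and `pd`.

The regularity bounds the degree of the nonvanishing cohomology of the lower intervals `[∅, σ]`, or,
by the long exact sequences of a facet, of the upper intervals `[σ, V]`. Complementing the cells
turns the upper intervals into lower ones and the ideal into its Alexander dual, and the same bound
becomes the one on the homological degree which defines the projective dimension. This is Terai's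
formula `pd(R/I^∨) = reg(R/I) + 1`.
-/

open Finset

section CochainComplex

variable {R M M' : Type*} [Ring R] [AddCommGroup M] [Module R M] [AddCommGroup M'] [Module R M']

/-- A cochain complex `⋯ → C j → C (j + 1) → ⋯` whose terms are submodules of one ambient module,
with the differential induced by an endomorphism of that module. -/
structure IsCochainComplex (d : M →ₗ[R] M) (C : ℤ → Submodule R M) : Prop where
  map_mem : ∀ ⦃j c⦄, c ∈ C j → d c ∈ C (j + 1)
  map_map : ∀ ⦃j c⦄, c ∈ C j → d (d c) = 0

/-- Vanishing of the cohomology of `(C, d)` in degree `j`. -/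
def ExactAt (d : M →ₗ[R] M) (C : ℤ → Submodule R M) (j : ℤ) : Prop :=
  ∀ c ∈ C j, d c = 0 → ∃ b ∈ C (j - 1), d b = c

theorem exactAt_congr {d d' : M →ₗ[R] M} {C : ℤ → Submodule R M} {j : ℤ}
    (hd : ∀ ⦃i c⦄, c ∈ C i → d c = d' c) : ExactAt d C j ↔ ExactAt d' C j :=
  forall₂_congr fun _ hc ↦ imp_congr (by rw [hd hc]) <| exists_congr fun _ ↦
    and_congr_right fun hb ↦ by rw [hd hb]

/-- A short exact sequence of complexes `0 → A → B → C → 0`, with `A` realised inside `B` as the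
kernel of `f`. -/
structure IsShortExact (d : M →ₗ[R] M) (d' : M' →ₗ[R] M') (f : M →ₗ[R] M')
    (A B : ℤ → Submodule R M) (C : ℤ → Submodule R M') : Prop where
  isCochainComplex : IsCochainComplex d B
  comm : ∀ ⦃j b⦄, b ∈ B j → f (d b) = d' (f b)
  map_eq : ∀ j, (B j).map f = C j
  inf_ker : ∀ j, B j ⊓ LinearMap.ker f = A j

namespace IsShortExact

variable {d : M →ₗ[R] M} {d' : M' →ₗ[R] M'} {f : M →ₗ[R] M'} {A B : ℤ → Submodule R M}
  {C : ℤ → Submodule R M'} {j : ℤ}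

theorem exactAt_left (h : IsShortExact d d' f A B C) (hC : ExactAt d' C (j - 1))
    (hB : ∀ a ∈ A j, d a = 0 → ∃ b ∈ B (j - 1), d b = a) : ExactAt d A j := by
  intro a ha hda
  obtain ⟨b, hb, rfl⟩ := hB a ha hda
  have hfb : d' (f b) = 0 := by
    rw [← h.inf_ker] at ha
    rw [← h.comm hb]
    exact ha.2
  obtain ⟨c, hc, hcb⟩ := hC (f b) (h.map_eq _ ▸ Submodule.mem_map_of_mem hb) hfb
  rw [← h.map_eq] at hc
  obtain ⟨e, he, rfl⟩ := hc
  have hde : d e ∈ B (j - 1) := by simpa using h.isCochainComplex.map_mem he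
  refine ⟨b - d e, ?_, by rw [map_sub, h.isCochainComplex.map_map he, sub_zero]⟩
  rw [← h.inf_ker]
  exact ⟨sub_mem hb hde, by simp [h.comm he, hcb]⟩

theorem exactAt_right (h : IsShortExact d d' f A B C) (hB : ExactAt d B j)
    (hA : ExactAt d A (j + 1)) : ExactAt d' C j := by
  intro c hc hdc
  rw [← h.map_eq] at hc
  obtain ⟨b, hb, rfl⟩ := hc
  have hdb : d b ∈ A (j + 1) := by
    rw [← h.inf_ker]
    exact ⟨h.isCochainComplex.map_mem hb, by simp [h.comm hb, hdc]⟩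
  obtain ⟨a, ha, hab⟩ := hA _ hdb (h.isCochainComplex.map_map hb)
  rw [add_sub_cancel_right, ← h.inf_ker] at ha
  obtain ⟨e, he, heb⟩ := hB (b - a) (sub_mem hb ha.1) (by rw [map_sub, hab, sub_self])
  refine ⟨f e, h.map_eq _ ▸ Submodule.mem_map_of_mem he, ?_⟩
  have hfa : f a = 0 := ha.2
  rw [← h.comm he, heb, map_sub, hfa, sub_zero]

end IsShortExact

end CochainComplex

section Cube

variable {V R W : Type*} [CommRing R] [AddCommGroup W] [Module R W]

/-- The cochains of degree `j` on the cells in `P`, with value on a cell `γ` in `N γ`. -/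
def cochains (N : Finset V → Submodule R W) (P : Set (Finset V)) (j : ℤ) :
    Submodule R (Finset V → W) :=
  Submodule.pi Set.univ fun γ ↦ ⨆ _ : γ ∈ P ∧ (#γ : ℤ) = j, N γ

/-- Restriction of cochains to the cells in `P`, extended by zero. -/
noncomputable def indicatorLinearMap (P : Set (Finset V)) :
    (Finset V → W) →ₗ[R] (Finset V → W) where
  toFun := P.indicator
  map_add' := Set.indicator_add' P
  map_smul' := Set.indicator_const_smul P

@[simp]
theorem indicatorLinearMap_apply (P : Set (Finset V)) (c : Finset V → W) :
    indicatorLinearMap (R := R) P c = P.indicator c :=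
  rfl

variable {N : Finset V → Submodule R W} {P F : Set (Finset V)} {j : ℤ}
  {c : Finset V → W} {α β γ σ : Finset V} {v : V}

theorem mem_cochains :
    c ∈ cochains N P j ↔ ∀ γ, c γ ∈ N γ ∧ (c γ ≠ 0 → γ ∈ P ∧ (#γ : ℤ) = j) := by
  simp only [cochains, Submodule.mem_pi, Set.mem_univ, true_imp_iff]
  refine forall_congr' fun γ ↦ ?_
  by_cases h : γ ∈ P ∧ (#γ : ℤ) = j
  · rw [iSup_pos h, and_iff_left fun _ ↦ h]
  · rw [iSup_neg h, Submodule.mem_bot]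
    exact ⟨fun h0 ↦ by simp [h0], fun h0 ↦ by_contra fun hc ↦ h (h0.2 hc)⟩

theorem mem_cochains_top :
    c ∈ cochains (⊤ : Finset V → Submodule R W) P j ↔ ∀ γ, c γ ≠ 0 → γ ∈ P ∧ (#γ : ℤ) = j :=
  mem_cochains.trans <| forall_congr' fun _ ↦ and_iff_right trivial

theorem cochains_apply_eq_zero (hc : c ∈ cochains N P j) (hγ : γ ∈ P → (#γ : ℤ) ≠ j) :
    c γ = 0 :=
  by_contra fun h ↦ hγ ((mem_cochains.1 hc γ).2 h).1 ((mem_cochains.1 hc γ).2 h).2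

/-- The coefficient system with constant value `W` on the cells in `F`, and zero elsewhere. -/
def constOn (R W : Type*) [CommRing R] [AddCommGroup W] [Module R W] (F : Set (Finset V))
    (γ : Finset V) : Submodule R W :=
  ⨆ _ : γ ∈ F, ⊤

theorem constOn_of_mem (hγ : γ ∈ F) : constOn R W F γ = ⊤ :=
  iSup_pos hγ

theorem constOn_of_notMem (hγ : γ ∉ F) : constOn R W F γ = ⊥ :=
  iSup_neg hγ

theorem constOn_mono (hF : IsUpperSet F) : Monotone (constOn R W F) :=
  fun _ _ h ↦ iSup_mono' fun hγ ↦ ⟨hF h hγ, le_rfl⟩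

theorem cochains_constOn : cochains (constOn R W F) P j = cochains ⊤ (P ∩ F) j := by
  ext c
  rw [mem_cochains, mem_cochains_top]
  refine forall_congr' fun γ ↦ ?_
  by_cases hγ : γ ∈ F
  · simp [constOn_of_mem hγ, hγ]
  · simp +contextual [constOn_of_notMem hγ, hγ]

variable [DecidableEq V]

/-- An incidence function on the cube `2^V`: the coefficients `s v γ = ±1` with which
`γ.erase v` occurs in the boundary of `γ`. -/
structure IsSign (s : V → Finset V → R) : Prop where
  sq : ∀ v γ, s v γ * s v γ = 1
  anti : ∀ ⦃v w γ⦄, v ∈ γ → w ∈ γ → v ≠ w →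
    s v γ * s w (γ.erase v) + s w γ * s v (γ.erase w) = 0

/-- The coboundary of the cube, restricted to the cells in `P`. -/
noncomputable def coboundary (s : V → Finset V → R) (P : Set (Finset V)) :
    (Finset V → W) →ₗ[R] (Finset V → W) :=
  indicatorLinearMap P ∘ₗ
    LinearMap.pi fun γ ↦ ∑ v ∈ γ, s v γ • LinearMap.proj (γ.erase v)

/-- Vanishing in degree `j` of the cohomology of `P` with coefficients `N`. -/
def CubeExactAt (s : V → Finset V → R) (N : Finset V → Submodule R W) (P : Set (Finset V))
    (j : ℤ) : Prop :=
  ExactAt (coboundary s P) (cochains N P) j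

variable {s : V → Finset V → R}

theorem coboundary_apply_of_mem (s : V → Finset V → R) (c : Finset V → W) (hγ : γ ∈ P) :
    coboundary s P c γ = ∑ v ∈ γ, s v γ • c (γ.erase v) := by
  simp [coboundary, hγ]

theorem coboundary_apply_of_notMem (s : V → Finset V → R) (c : Finset V → W) (hγ : γ ∉ P) :
    coboundary s P c γ = 0 := by
  simp [coboundary, hγ]

theorem coboundary_mem_cochains (hN : Monotone N) (hc : c ∈ cochains N P j) :
    coboundary s P c ∈ cochains N P (j + 1) := by
  refine mem_cochains.2 fun γ ↦ ?_
  by_cases hγ : γ ∈ P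
  · rw [coboundary_apply_of_mem s c hγ]
    refine ⟨sum_mem fun v _ ↦ Submodule.smul_mem _ _
      (hN (γ.erase_subset v) (mem_cochains.1 hc _).1), fun h ↦ ⟨hγ, ?_⟩⟩
    obtain ⟨v, hv, hne⟩ := exists_ne_zero_of_sum_ne_zero h
    rw [← card_erase_add_one hv, Nat.cast_succ,
      ((mem_cochains.1 hc _).2 (right_ne_zero_of_smul hne)).2]
  · simp [coboundary_apply_of_notMem s c hγ]

theorem coboundary_coboundary (hs : IsSign s) (hP : P.OrdConnected) (hc : ∀ γ ∉ P, c γ = 0) :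
    coboundary s P (coboundary s P c) = 0 := by
  funext γ
  by_cases hγ : γ ∈ P
  swap
  · exact coboundary_apply_of_notMem s _ hγ
  have inner (v : V) : coboundary s P c (γ.erase v) =
      ∑ w ∈ γ.erase v, s w (γ.erase v) • c ((γ.erase v).erase w) := by
    by_cases h : γ.erase v ∈ P
    · exact coboundary_apply_of_mem s c h
    rw [coboundary_apply_of_notMem s c h]
    refine (sum_eq_zero fun w _ ↦ ?_).symm
    rw [hc _ fun hw ↦ h (hP.out hw hγ ⟨erase_subset _ _, erase_subset _ _⟩), smul_zero]
  simp only [coboundary_apply_of_mem s _ hγ, inner, smul_sum, Pi.zero_apply, sum_sigma',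
    smul_smul]
  refine sum_involution (fun p _ ↦ ⟨p.2, p.1⟩) ?_ ?_ ?_ fun _ _ ↦ rfl
  · rintro ⟨v, w⟩ h
    simp only [mem_sigma, mem_erase] at h
    rw [erase_right_comm (a := w), ← add_smul, hs.anti h.1 h.2.2 h.2.1.symm, zero_smul]
  · rintro ⟨v, w⟩ h - he
    simp only [mem_sigma, mem_erase] at h
    exact h.2.1 (congrArg Sigma.fst he)
  · rintro ⟨v, w⟩ h
    simp only [mem_sigma, mem_erase] at h ⊢
    exact ⟨h.2.2, h.2.1.symm, h.1⟩

theorem isCochainComplex_cochains (hs : IsSign s) (hN : Monotone N) (hP : P.OrdConnected) :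
    IsCochainComplex (coboundary s P) (cochains N P) where
  map_mem _ _ hc := coboundary_mem_cochains hN hc
  map_map _ _ hc := coboundary_coboundary hs hP fun _ h ↦
    cochains_apply_eq_zero hc fun hγ ↦ absurd hγ h

section UpperSet

theorem coboundary_inter_eq (hF : IsUpperSet F) (hc : c ∈ cochains N (P ∩ F) j) :
    coboundary s (P ∩ F) c = coboundary s P c := by
  funext γ
  by_cases hP : γ ∈ P
  swap
  · rw [coboundary_apply_of_notMem s c hP, coboundary_apply_of_notMem s c fun h ↦ hP h.1]
  rw [coboundary_apply_of_mem s c hP]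
  by_cases hγ : γ ∈ F
  · exact coboundary_apply_of_mem s c ⟨hP, hγ⟩
  rw [coboundary_apply_of_notMem s c fun h ↦ hγ h.2]
  refine (sum_eq_zero fun v _ ↦ ?_).symm
  rw [cochains_apply_eq_zero hc fun h ↦ absurd (hF (erase_subset v γ) h.2) hγ, smul_zero]

theorem isShortExact_inter_diff (hs : IsSign s) (hN : Monotone N) (hP : P.OrdConnected)
    (hF : IsUpperSet F) :
    IsShortExact (coboundary s P) (coboundary s (P \ F)) (indicatorLinearMap Fᶜ)
      (cochains N (P ∩ F)) (cochains N P) (cochains N (P \ F)) where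
  isCochainComplex := isCochainComplex_cochains hs hN hP
  comm j b _ := by
    funext γ
    by_cases hγ : γ ∈ F
    · simp [hγ, coboundary_apply_of_notMem s (Fᶜ.indicator b) fun h : γ ∈ P \ F ↦ h.2 hγ]
    by_cases hγP : γ ∈ P
    · have hF' (v : V) : γ.erase v ∉ F := fun h ↦ hγ (hF (erase_subset v γ) h)
      simp [hγ, coboundary_apply_of_mem s _ hγP, hF',
        coboundary_apply_of_mem s (Fᶜ.indicator b) (P := P \ F) ⟨hγP, hγ⟩]
    · simp [hγ, coboundary_apply_of_notMem s _ hγP,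
        coboundary_apply_of_notMem s (Fᶜ.indicator b) fun h : γ ∈ P \ F ↦ hγP h.1]
  map_eq j := by
    ext c
    constructor
    · rintro ⟨b, hb, rfl⟩
      refine mem_cochains.2 fun γ ↦ ?_
      obtain ⟨hbN, hbP⟩ := mem_cochains.1 hb γ
      by_cases hγ : γ ∈ F
      · simp [hγ]
      · simpa [hγ] using ⟨hbN, hbP⟩
    · refine fun hc ↦ ⟨c, mem_cochains.2 fun γ ↦ ?_, Set.indicator_eq_self.2 fun γ h ↦ ?_⟩
      · exact (mem_cochains.1 hc γ).imp_right fun h h0 ↦ (h h0).imp_left And.left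
      · exact ((mem_cochains.1 hc γ).2 h).1.2
  inf_ker j := by
    ext c
    simp only [Submodule.mem_inf, LinearMap.mem_ker, indicatorLinearMap_apply, mem_cochains,
      Set.mem_inter_iff, Set.indicator_eq_zero', Set.disjoint_compl_right_iff_subset]
    refine ⟨fun ⟨h, hsub⟩ γ ↦ ⟨(h γ).1, fun h0 ↦ ?_⟩, fun h ↦ ⟨fun γ ↦ ⟨(h γ).1, fun h0 ↦ ?_⟩,
      fun γ h0 ↦ ((h γ).2 h0).1.2⟩⟩
    · exact ((h γ).2 h0).imp_left fun hP ↦ ⟨hP, hsub h0⟩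
    · exact ((h γ).2 h0).imp_left And.left

theorem CubeExactAt.inter (hs : IsSign s) (hN : Monotone N) (hP : P.OrdConnected)
    (hF : IsUpperSet F) (h : CubeExactAt s N P j) (h' : CubeExactAt s N (P \ F) (j - 1)) :
    CubeExactAt s N (P ∩ F) j := by
  have hA : ∀ i, cochains N (P ∩ F) i ≤ cochains N P i := fun i ↦ by
    rw [← (isShortExact_inter_diff hs hN hP hF).inf_ker]
    exact inf_le_left
  refine (exactAt_congr fun _ _ hc ↦ coboundary_inter_eq hF hc).2 ?_
  exact (isShortExact_inter_diff hs hN hP hF).exactAt_left h' fun a ha ↦ h a (hA j ha)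

theorem CubeExactAt.diff (hs : IsSign s) (hN : Monotone N) (hP : P.OrdConnected)
    (hF : IsUpperSet F) (h : CubeExactAt s N P j) (h' : CubeExactAt s N (P ∩ F) (j + 1)) :
    CubeExactAt s N (P \ F) j :=
  (isShortExact_inter_diff hs hN hP hF).exactAt_right h <|
    (exactAt_congr fun _ _ hc ↦ coboundary_inter_eq hF hc).1 h'

end UpperSet

theorem cubeExactAt_constOn (hF : IsUpperSet F) :
    CubeExactAt s (constOn R W F) P j ↔ CubeExactAt s (⊤ : Finset V → Submodule R W) (P ∩ F) j := by
  have h : cochains (constOn R W F) P = cochains ⊤ (P ∩ F) := funext fun _ ↦ cochains_constOn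
  rw [CubeExactAt, CubeExactAt, h]
  exact exactAt_congr fun _ _ hc ↦ (coboundary_inter_eq hF hc).symm

theorem cubeExactAt_of_card_ne (h : ∀ γ ∈ P, (#γ : ℤ) ≠ j) : CubeExactAt s N P j :=
  fun c hc _ ↦ ⟨0, zero_mem _, by
    rw [map_zero]
    exact funext fun γ ↦ (cochains_apply_eq_zero hc (h γ)).symm⟩

section Cone

theorem IsSign.mul_add_mul_eq_zero {w : V} (hs : IsSign s) (hv : v ∈ γ) (hw : w ∈ γ)
    (hvw : v ≠ w) : s v γ * s w γ + s w (γ.erase v) * s v (γ.erase w) = 0 := by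
  linear_combination s v γ * s v (γ.erase w) * hs.anti hv hw hvw
    - s w (γ.erase v) * s v (γ.erase w) * hs.sq v γ - s w γ * s v γ * hs.sq v (γ.erase w)

theorem sum_insert_eq_of_cocycle (hs : IsSign s) (hv : v ∉ γ)
    (hc : ∑ w ∈ insert v γ, s w (insert v γ) • c ((insert v γ).erase w) = 0) :
    ∑ w ∈ γ, s w γ • s v (insert v (γ.erase w)) • c (insert v (γ.erase w)) = c γ := by
  rw [sum_insert hv, erase_insert hv] at hc
  have hcγ := congrArg (s v (insert v γ) • ·) hc
  simp only [smul_add, smul_smul, hs.sq, one_smul, smul_zero, smul_sum] at hcγ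
  rw [eq_neg_of_add_eq_zero_left hcγ, ← sum_neg_distrib]
  refine sum_congr rfl fun w hw ↦ ?_
  have hvw : v ≠ w := fun h ↦ hv (h ▸ hw)
  have h := hs.mul_add_mul_eq_zero (mem_insert_self v γ) (mem_insert_of_mem hw) hvw
  rw [erase_insert hv, erase_insert_of_ne hvw] at h
  rw [erase_insert_of_ne hvw, smul_smul, eq_neg_of_add_eq_zero_right h, neg_smul]

theorem cubeExactAt_top_of_cone (hs : IsSign s) (h_insert : ∀ γ ∈ P, insert v γ ∈ P)
    (h_erase : ∀ γ ∈ P, γ.erase v ∈ P) : CubeExactAt s (⊤ : Finset V → Submodule R W) P j := by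
  intro c hc hdc
  refine ⟨fun γ ↦ if v ∈ γ then 0 else s v (insert v γ) • c (insert v γ),
    mem_cochains.2 fun γ ↦ ⟨trivial, fun hγ ↦ ?_⟩, ?_⟩
  · obtain ⟨hv, hne⟩ := ite_ne_left_iff.1 hγ
    obtain ⟨hP, hcard⟩ := (mem_cochains.1 hc _).2 (right_ne_zero_of_smul hne.symm)
    rw [card_insert_of_notMem hv] at hcard
    refine ⟨by simpa [hv] using h_erase _ hP, by lia⟩
  · funext γ
    by_cases hP : γ ∈ P
    swap
    · rw [coboundary_apply_of_notMem s _ hP, cochains_apply_eq_zero hc fun h ↦ absurd h hP]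
    rw [coboundary_apply_of_mem s _ hP]
    by_cases hv : v ∈ γ
    · rw [sum_eq_single_of_mem v hv fun w _ hwv ↦ by simp [hv, hwv.symm]]
      simp [hv, smul_smul, hs.sq]
    · have hdγ := congrFun hdc (insert v γ)
      rw [coboundary_apply_of_mem s c (h_insert γ hP)] at hdγ
      rw [← sum_insert_eq_of_cocycle hs hv hdγ]
      exact sum_congr rfl fun w _ ↦ by simp [hv]

theorem cubeExactAt_top_Icc (hs : IsSign s) (h : α ⊂ β) :
    CubeExactAt s (⊤ : Finset V → Submodule R W) (Set.Icc α β) j := by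
  obtain ⟨v, hvβ, hvα⟩ := exists_of_ssubset h
  exact cubeExactAt_top_of_cone hs
    (fun γ hγ ↦ ⟨hγ.1.trans (subset_insert v γ), insert_subset hvβ hγ.2⟩)
    fun γ hγ ↦ ⟨subset_erase.2 ⟨hγ.1, hvα⟩, (erase_subset v γ).trans hγ.2⟩

end Cone

section Intervals

theorem Icc_inter_Ici_singleton (α β : Finset V) (v : V) :
    Set.Icc α β ∩ Set.Ici {v} = Set.Icc (insert v α) β := by
  ext γ
  simp only [Set.mem_inter_iff, Set.mem_Icc, Set.mem_Ici, singleton_subset_iff, insert_subset_iff]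
  tauto

theorem Icc_diff_Ici_singleton (α β : Finset V) (v : V) :
    Set.Icc α β \ Set.Ici {v} = Set.Icc α (β.erase v) := by
  ext γ
  simp only [Set.mem_sdiff, Set.mem_Icc, Set.mem_Ici, singleton_subset_iff, subset_erase]
  tauto

theorem cubeExactAt_Icc_of_Iic (hs : IsSign s) (hN : Monotone N) {r : ℤ}
    (h : ∀ σ j, r < j → CubeExactAt s N (Set.Iic σ) j) (α β : Finset V) :
    ∀ j, r + #α < j → CubeExactAt s N (Set.Icc α β) j := by
  induction α using Finset.induction_on generalizing β with
  | empty => exact fun j hj ↦ by simpa [← bot_eq_empty] using h β j (by simpa using hj)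
  | insert v α hv ih =>
    intro j hj
    rw [card_insert_of_notMem hv] at hj
    rw [← Icc_inter_Ici_singleton]
    refine (ih β j (by lia)).inter hs hN Set.ordConnected_Icc (isUpperSet_Ici {v}) ?_
    rw [Icc_diff_Ici_singleton]
    exact ih _ _ (by lia)

theorem cubeExactAt_Icc_of_Ici [Fintype V] (hs : IsSign s) (hN : Monotone N) {r : ℤ}
    (h : ∀ α j, r + #α < j → CubeExactAt s N (Set.Ici α) j) (δ : Finset V) :
    ∀ α j, r + #α < j → CubeExactAt s N (Set.Icc α δᶜ) j := by
  induction δ using Finset.induction_on with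
  | empty => exact fun α j hj ↦ by simpa [← top_eq_univ] using h α j hj
  | insert v δ _ ih =>
    intro α j hj
    rw [compl_insert, ← Icc_diff_Ici_singleton]
    refine (ih α j hj).diff hs hN Set.ordConnected_Icc (isUpperSet_Ici {v}) ?_
    rw [Icc_inter_Ici_singleton]
    exact ih _ _ (by have := card_insert_le v α; lia)

theorem forall_cubeExactAt_Iic_iff_Ici [Finite V] (hs : IsSign s) (hN : Monotone N) {r : ℤ} :
    (∀ σ j, r < j → CubeExactAt s N (Set.Iic σ) j) ↔
      ∀ α j, r + #α < j → CubeExactAt s N (Set.Ici α) j := by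
  cases nonempty_fintype V
  constructor
  · intro h α j hj
    simpa [← top_eq_univ] using cubeExactAt_Icc_of_Iic hs hN h α univ j hj
  · intro h σ j hj
    simpa [← bot_eq_empty] using cubeExactAt_Icc_of_Ici hs hN h σᶜ ∅ j (by simpa using hj)

end Intervals

end Cube

section AlexanderDuality

variable {V K : Type*} [DecidableEq V] [Fintype V] [Field K] {s : V → Finset V → K}
  {P : Set (Finset V)} {b c : Finset V → K} {j : ℤ}

/-- The incidence function that the cube acquires when its cells are replaced by their
complements. -/
def dualSign (s : V → Finset V → K) (v : V) (γ : Finset V) : K :=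
  s v (insert v γᶜ)

theorem isSign_dualSign (hs : IsSign s) : IsSign (dualSign s) where
  sq v γ := hs.sq v _
  anti v w γ hv hw hvw := by
    have h := hs.anti (v := v) (w := w) (γ := insert w (insert v γᶜ)) (by simp) (by simp) hvw
    rw [erase_insert (by simp [hw, hvw.symm]), insert_comm, erase_insert (by simp [hv, hvw]),
      insert_comm] at h
    simp only [dualSign, compl_erase, insert_comm v w]
    linear_combination h

theorem coboundary_dualSign_dualSign (s : V → Finset V → K) (P : Set (Finset V)) :
    coboundary (W := K) (dualSign (dualSign s)) P = coboundary s P := by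
  have h (v : V) (γ : Finset V) (hv : v ∈ γ) : dualSign (dualSign s) v γ = s v γ := by
    rw [dualSign, dualSign, compl_insert, compl_compl, insert_erase hv]
  refine LinearMap.ext fun c ↦ funext fun γ ↦ ?_
  by_cases hγ : γ ∈ P
  · rw [coboundary_apply_of_mem _ c hγ, coboundary_apply_of_mem _ c hγ]
    exact sum_congr rfl fun v hv ↦ by rw [h v γ hv]
  · rw [coboundary_apply_of_notMem _ c hγ, coboundary_apply_of_notMem _ c hγ]

/-- The pairing of cochains which matches each cell with its complement. -/
def complPairing (b : Finset V → K) : Module.Dual K (Finset V → K) :=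
  ∑ γ, b γᶜ • LinearMap.proj γ

theorem complPairing_apply (b c : Finset V → K) : complPairing b c = ∑ γ, b γᶜ * c γ := by
  simp [complPairing]

theorem complPairing_coboundary {i : ℤ}
    (hb : b ∈ cochains (⊤ : Finset V → Submodule K K) (compl ⁻¹' P) i)
    (hc : c ∈ cochains (⊤ : Finset V → Submodule K K) P j) :
    complPairing b (coboundary s P c) =
      complPairing (coboundary (dualSign s) (compl ⁻¹' P) b) c := by
  have hl (γ : Finset V) : b γᶜ * coboundary s P c γ =
      ∑ v ∈ γ, b γᶜ * (s v γ * c (γ.erase v)) := by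
    by_cases h : b γᶜ = 0
    · simp [h]
    · rw [coboundary_apply_of_mem s c (by simpa using (mem_cochains_top.1 hb _ h).1), mul_sum]
      simp only [smul_eq_mul]
  have hr (γ : Finset V) : coboundary (dualSign s) (compl ⁻¹' P) b γᶜ * c γ =
      ∑ v ∈ γᶜ, b (insert v γ)ᶜ * (s v (insert v γ) * c γ) := by
    by_cases h : c γ = 0
    · simp [h]
    · rw [coboundary_apply_of_mem _ b (by simpa using (mem_cochains_top.1 hc γ h).1), sum_mul]
      refine sum_congr rfl fun v _ ↦ ?_
      rw [dualSign, compl_compl, compl_insert, smul_eq_mul]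
      ring
  simp only [complPairing_apply, hl, hr, sum_sigma']
  refine sum_bij' (fun p _ ↦ ⟨p.1.erase p.2, p.2⟩) (fun p _ ↦ ⟨insert p.2 p.1, p.2⟩)
    (by simp) (by simp) ?_ ?_ ?_ <;>
  · rintro ⟨γ, v⟩ h
    simp only [mem_sigma, mem_univ, true_and, mem_compl] at h
    simp [h]

theorem exists_dual_comp_eq {E M : Type*} [AddCommGroup E] [Module K E] [AddCommGroup M]
    [Module K M] (d : E →ₗ[K] M) (C : Submodule K E) (φ : Module.Dual K E)
    (h : ∀ u ∈ C, d u = 0 → φ u = 0) :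
    ∃ ψ : Module.Dual K M, ∀ u ∈ C, ψ (d u) = φ u := by
  have hφ : φ.domRestrict C ∈ (LinearMap.ker (d.domRestrict C)).dualAnnihilator :=
    (Submodule.mem_dualAnnihilator _).2 fun u hu ↦ h u u.2 hu
  rw [← LinearMap.range_dualMap_eq_dualAnnihilator_ker] at hφ
  obtain ⟨ψ, hψ⟩ := hφ
  exact ⟨ψ, fun u hu ↦ LinearMap.congr_fun hψ ⟨u, hu⟩⟩

theorem mem_cochains_compl : b ∈ cochains (⊤ : Finset V → Submodule K K) (compl ⁻¹' P)
    (Fintype.card V - j) ↔ ∀ γ, b γ ≠ 0 → γᶜ ∈ P ∧ (#γᶜ : ℤ) = j := by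
  rw [mem_cochains_top]
  refine forall₂_congr fun γ _ ↦ and_congr_right fun _ ↦ ?_
  rw [card_compl, Nat.cast_sub (card_le_univ γ)]
  lia

theorem exists_complPairing_eq (ψ : Module.Dual K (Finset V → K)) (P : Set (Finset V)) (j : ℤ) :
    ∃ b ∈ cochains (⊤ : Finset V → Submodule K K) (compl ⁻¹' P) (Fintype.card V - j),
      ∀ c ∈ cochains (⊤ : Finset V → Submodule K K) P j, complPairing b c = ψ c := by
  classical
  refine ⟨fun γ ↦ if γᶜ ∈ P ∧ (#γᶜ : ℤ) = j then ψ (Pi.single γᶜ 1) else 0,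
    mem_cochains_compl.2 fun γ hγ ↦ (ite_ne_right_iff.1 hγ).1, fun c hc ↦ ?_⟩
  rw [complPairing_apply, LinearMap.pi_apply_eq_sum_univ ψ]
  refine sum_congr rfl fun γ _ ↦ ?_
  by_cases h0 : c γ = 0
  · simp [h0]
  · have hsingle : (Pi.single γ 1 : Finset V → K) = fun δ ↦ if γ = δ then 1 else 0 := by
      ext δ
      rw [Pi.single_apply]
      exact if_congr eq_comm rfl rfl
    simp [mem_cochains_top.1 hc γ h0, hsingle, mul_comm]

theorem eq_of_complPairing_eq {x : Finset V → K}
    (hx : x ∈ cochains (⊤ : Finset V → Submodule K K) (compl ⁻¹' P) (Fintype.card V - j))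
    (hb : b ∈ cochains (⊤ : Finset V → Submodule K K) (compl ⁻¹' P) (Fintype.card V - j))
    (h : ∀ c ∈ cochains (⊤ : Finset V → Submodule K K) P j, complPairing b c = complPairing x c) :
    b = x := by
  rw [mem_cochains_compl] at hx hb
  funext γ
  by_cases hγ : γᶜ ∈ P ∧ (#γᶜ : ℤ) = j
  · simpa [complPairing_apply, Pi.single_apply] using h (Pi.single γᶜ 1) <|
      mem_cochains_top.2 fun δ hδ ↦ by
        obtain rfl : δ = γᶜ := by_contra fun h ↦ hδ (Pi.single_eq_of_ne h 1)
        exact hγ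
  · rw [not_imp_comm.1 (hb γ) hγ, not_imp_comm.1 (hx γ) hγ]

theorem CubeExactAt.compl (h : CubeExactAt s (⊤ : Finset V → Submodule K K) P j) :
    CubeExactAt (dualSign s) (⊤ : Finset V → Submodule K K) (compl ⁻¹' P)
      (Fintype.card V - j) := by
  intro x hx hdx
  have hpairing : ∀ u ∈ cochains (⊤ : Finset V → Submodule K K) P j, coboundary s P u = 0 →
      complPairing x u = 0 := by
    intro u hu hdu
    obtain ⟨e, he, rfl⟩ := h u hu hdu
    rw [complPairing_coboundary hx he, hdx]
    simp [complPairing_apply]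
  obtain ⟨ψ, hψ⟩ := exists_dual_comp_eq (coboundary s P) _ (complPairing x) hpairing
  obtain ⟨b, hb, hbψ⟩ := exists_complPairing_eq ψ P (j + 1)
  have hdb := coboundary_mem_cochains (s := dualSign s) monotone_const hb
  rw [sub_add_eq_sub_sub] at hb
  rw [sub_add_eq_sub_sub, sub_add_cancel] at hdb
  refine ⟨b, hb, eq_of_complPairing_eq hx hdb fun c hc ↦ ?_⟩
  rw [← complPairing_coboundary hb hc, hbψ _ (coboundary_mem_cochains monotone_const hc), hψ c hc]

theorem cubeExactAt_dualSign :
    CubeExactAt (dualSign s) (⊤ : Finset V → Submodule K K) (compl ⁻¹' P) j ↔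
      CubeExactAt s (⊤ : Finset V → Submodule K K) P (Fintype.card V - j) := by
  constructor
  · intro h
    have h' := h.compl
    simp only [Set.preimage_preimage, compl_compl, Set.preimage_id'] at h'
    rwa [CubeExactAt, coboundary_dualSign_dualSign] at h'
  · intro h
    simpa using h.compl

/-- The Alexander dual of a simplicial complex, in terms of the sets of nonfaces. -/
def alexanderDual (U : UpperSet (Finset V)) : UpperSet (Finset V) where
  carrier := {γ | γᶜ ∉ U}
  upper' _ _ h hγ hδ := hγ (U.upper (compl_subset_compl.2 h) hδ)

theorem mem_alexanderDual {U : UpperSet (Finset V)} {γ : Finset V} :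
    γ ∈ alexanderDual U ↔ γᶜ ∉ U :=
  Iff.rfl

theorem cubeExactAt_diff_iff_inter {α : Finset V} {F : Set (Finset V)} (hs : IsSign s)
    (hα : α ≠ univ) (hF : IsUpperSet F) :
    CubeExactAt s (⊤ : Finset V → Submodule K K) (Set.Ici α \ F) j ↔
      CubeExactAt s (⊤ : Finset V → Submodule K K) (Set.Ici α ∩ F) (j + 1) := by
  have hIci (i : ℤ) : CubeExactAt s (⊤ : Finset V → Submodule K K) (Set.Ici α) i := by
    rw [← Set.Icc_top]
    exact cubeExactAt_top_Icc hs (ssubset_univ_iff.2 hα)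
  exact ⟨fun h ↦ (hIci _).inter hs monotone_const Set.ordConnected_Ici hF (by simpa using h),
    (hIci j).diff hs monotone_const Set.ordConnected_Ici hF⟩

theorem cubeExactAt_alexanderDual {U : UpperSet (Finset V)} {α : Finset V} (hs : IsSign s)
    (hα : α ≠ univ) :
    CubeExactAt (dualSign s) (⊤ : Finset V → Submodule K K) (Set.Iic αᶜ ∩ alexanderDual U) j ↔
      CubeExactAt s (⊤ : Finset V → Submodule K K) (Set.Ici α ∩ U)
        (Fintype.card V - j + 1) := by
  have hcompl : Set.Iic αᶜ ∩ (alexanderDual U : Set (Finset V)) =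
      compl ⁻¹' (Set.Ici α \ (U : Set (Finset V))) := by
    ext γ
    exact and_congr_left' subset_compl_comm
  rw [hcompl, cubeExactAt_dualSign, cubeExactAt_diff_iff_inter hs hα U.upper]

theorem cubeExactAt_of_card_lt {N : Finset V → Submodule K K} (h : Fintype.card V < j) :
    CubeExactAt s N P j :=
  cubeExactAt_of_card_ne fun γ _ ↦ by have := card_le_univ γ; lia

theorem forall_cubeExactAt_alexanderDual_iff {U : UpperSet (Finset V)} (hs : IsSign s)
    (hU : univ ∈ U) (d : ℕ) :
    (∀ σ (i : ℕ), d ≤ i →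
        CubeExactAt (dualSign s) (constOn K K (alexanderDual U)) (Set.Iic σ) (#σ - i)) ↔
      ∀ σ (j : ℤ), d < j → CubeExactAt s (constOn K K U) (Set.Iic σ) j := by
  rw [forall_cubeExactAt_Iic_iff_Ici hs (constOn_mono U.upper), compl_surjective.forall]
  refine forall_congr' fun α ↦ ?_
  simp only [cubeExactAt_constOn (UpperSet.upper _)]
  have hcard : (#αᶜ : ℤ) = Fintype.card V - #α := by
    rw [card_compl, Nat.cast_sub (card_le_univ α)]
  obtain rfl | hα := eq_or_ne α univ
  · refine iff_of_true (fun i _ ↦ cubeExactAt_of_card_ne ?_) fun j hj ↦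
      cubeExactAt_of_card_lt (by rw [card_univ] at hj; lia)
    rintro γ ⟨hγ, hγU⟩
    simp_all [mem_alexanderDual]
  · simp only [cubeExactAt_alexanderDual hs hα, hcard]
    refine ⟨fun h j hj ↦ ?_, fun h i hi ↦ h _ (by lia)⟩
    have := h (j - 1 - #α).toNat (by lia)
    rwa [Int.toNat_of_nonneg (by lia), show (Fintype.card V : ℤ) -
      (Fintype.card V - #α - (j - 1 - #α)) + 1 = j by ring] at this

end AlexanderDuality

section StandardSign

variable {V : Type*} [LinearOrder V] (R : Type*) [CommRing R]

/-- The standard incidence function of the cube on a linearly ordered set of vertices. -/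
def standardSign (v : V) (γ : Finset V) : R :=
  (-1) ^ #{w ∈ γ | w < v}

theorem isSign_standardSign : IsSign (standardSign (V := V) R) where
  sq v γ := by rw [standardSign, ← mul_pow, neg_one_mul, neg_neg, one_pow]
  anti := by
    have main {v w : V} {γ : Finset V} (hv : v ∈ γ) (hvw : v < w) :
        standardSign R v γ * standardSign R w (γ.erase v) +
          standardSign R w γ * standardSign R v (γ.erase w) = 0 := by
      have hw : #{u ∈ γ | u < w} = #{u ∈ γ.erase v | u < w} + 1 := by
        rw [filter_erase, card_erase_add_one (mem_filter.2 ⟨hv, hvw⟩)]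
      have hv' : #{u ∈ γ.erase w | u < v} = #{u ∈ γ | u < v} := by
        rw [filter_erase, erase_eq_of_notMem (by simp [hvw.not_gt])]
      rw [standardSign, standardSign, standardSign, standardSign, hw, hv', pow_succ]
      ring
    intro v w γ hv hw hvw
    obtain h | h := hvw.lt_or_gt
    · exact main hv h
    · rw [add_comm]
      exact main hw h

end StandardSign

section Coordinates

variable {V R W ι : Type*} [CommRing R] [AddCommGroup W] [Module R W]
  {N : ι → Finset V → Submodule R W} {P : Set (Finset V)} {j : ℤ}

theorem mem_cochains_pi {c : Finset V → ι → W} :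
    c ∈ cochains (fun γ ↦ Submodule.pi Set.univ fun k ↦ N k γ) P j ↔
      ∀ k, (fun γ ↦ c γ k) ∈ cochains (N k) P j := by
  simp only [mem_cochains, Submodule.mem_pi, Set.mem_univ, true_imp_iff]
  rw [forall_comm]
  refine forall_congr' fun γ ↦ ?_
  refine (and_congr_right' ?_).trans forall_and.symm
  rw [Function.ne_iff, exists_imp]
  rfl

variable [DecidableEq V] {s : V → Finset V → R}

theorem coboundary_apply_apply (s : V → Finset V → R) (P : Set (Finset V)) (c : Finset V → ι → W)
    (γ : Finset V) (k : ι) : coboundary s P c γ k = coboundary s P (fun δ ↦ c δ k) γ := by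
  by_cases hγ : γ ∈ P
  · simp [coboundary_apply_of_mem s _ hγ]
  · simp [coboundary_apply_of_notMem s _ hγ]

theorem cubeExactAt_pi :
    CubeExactAt s (fun γ ↦ Submodule.pi Set.univ fun k ↦ N k γ) P j ↔
      ∀ k, CubeExactAt s (N k) P j := by
  classical
  constructor
  · intro h k c hc hdc
    let c' : Finset V → ι → W := fun γ ↦ Pi.single k (c γ)
    have hk : (fun γ ↦ c' γ k) = c := funext fun γ ↦ Pi.single_eq_same k _
    have hl {l : ι} (hl : l ≠ k) : (fun γ ↦ c' γ l) = 0 := funext fun γ ↦ Pi.single_eq_of_ne hl _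
    have hc' : c' ∈ cochains (fun γ ↦ Submodule.pi Set.univ fun k ↦ N k γ) P j := by
      refine mem_cochains_pi.2 fun l ↦ ?_
      obtain rfl | hlk := eq_or_ne l k
      · rwa [hk]
      · rw [hl hlk]
        exact zero_mem _
    obtain ⟨b, hb, hdb⟩ := h c' hc' <| by
      funext γ l
      rw [coboundary_apply_apply]
      obtain rfl | hlk := eq_or_ne l k
      · rw [hk, hdc]
        rfl
      · rw [hl hlk, map_zero]
        rfl
    refine ⟨fun γ ↦ b γ k, mem_cochains_pi.1 hb k, funext fun γ ↦ ?_⟩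
    rw [← coboundary_apply_apply, hdb]
    exact congrFun hk γ
  · intro h c hc hdc
    have hdc' (k : ι) : coboundary s P (fun γ ↦ c γ k) = 0 := funext fun γ ↦ by
      rw [← coboundary_apply_apply, hdc]
      rfl
    choose b hb hdb using fun k ↦ h k _ (mem_cochains_pi.1 hc k) (hdc' k)
    refine ⟨fun γ k ↦ b k γ, mem_cochains_pi.2 hb, ?_⟩
    funext γ k
    rw [coboundary_apply_apply, hdb]

end Coordinates

section Map

variable {V R W W' : Type*} [DecidableEq V] [CommRing R] [AddCommGroup W] [Module R W]
  [AddCommGroup W'] [Module R W'] {s : V → Finset V → R} {N : Finset V → Submodule R W}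
  {P : Set (Finset V)}

theorem isShortExact_map (hs : IsSign s) (hN : Monotone N) (hP : P.OrdConnected)
    (f : W →ₗ[R] W') :
    IsShortExact (coboundary s P) (coboundary s P) (f.compLeft (Finset V))
      (cochains (fun γ ↦ N γ ⊓ LinearMap.ker f) P) (cochains N P)
      (cochains (fun γ ↦ (N γ).map f) P) where
  isCochainComplex := isCochainComplex_cochains hs hN hP
  comm j b _ := by
    funext γ
    rw [LinearMap.compLeft_apply, Function.comp_apply]
    by_cases hγ : γ ∈ P
    · simp [coboundary_apply_of_mem s _ hγ]
    · simp [coboundary_apply_of_notMem s _ hγ]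
  map_eq j := by
    ext c
    constructor
    · rintro ⟨b, hb, rfl⟩
      refine mem_cochains.2 fun γ ↦ ⟨⟨b γ, (mem_cochains.1 hb γ).1, rfl⟩, fun h ↦ ?_⟩
      exact (mem_cochains.1 hb γ).2 fun h0 ↦ h (by simp [h0])
    · intro hc
      have hlift (γ : Finset V) : ∃ x ∈ N γ, f x = c γ ∧ (x ≠ 0 → c γ ≠ 0) := by
        by_cases h0 : c γ = 0
        · exact ⟨0, zero_mem _, by simp [h0]⟩
        · obtain ⟨x, hx, hfx⟩ := (mem_cochains.1 hc γ).1
          exact ⟨x, hx, hfx, fun _ ↦ h0⟩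
      choose b hb hfb hb0 using hlift
      exact ⟨b, mem_cochains.2 fun γ ↦ ⟨hb γ, fun h ↦ (mem_cochains.1 hc γ).2 (hb0 γ h)⟩,
        funext hfb⟩
  inf_ker j := by
    ext b
    rw [Submodule.mem_inf, mem_cochains, mem_cochains, LinearMap.ker_compLeft, Submodule.mem_pi]
    exact ⟨fun h γ ↦ ⟨⟨(h.1 γ).1, h.2 γ trivial⟩, (h.1 γ).2⟩,
      fun h ↦ ⟨fun γ ↦ ⟨(h γ).1.1, (h γ).2⟩, fun γ _ ↦ (h γ).1.2⟩⟩

end Map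

section Rad

variable {V R W : Type*} [DecidableEq V] [CommRing R] [AddCommGroup W] [Module R W]
  {s : V → Finset V → R} {N : Finset V → Submodule R W} {σ : Finset V}

/-- The part of `N σ` which comes from the proper faces of `σ`. -/
def rad (N : Finset V → Submodule R W) (σ : Finset V) : Submodule R W :=
  ⨆ v ∈ σ, N (σ.erase v)

theorem le_rad_of_ssubset (hN : Monotone N) {τ : Finset V} (h : τ ⊂ σ) : N τ ≤ rad N σ := by
  obtain ⟨v, hvσ, hvτ⟩ := exists_of_ssubset h
  exact (hN (subset_erase.2 ⟨h.1, hvτ⟩)).trans (le_iSup₂_of_le v hvσ le_rfl)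

theorem map_coboundary_eq_rad (hs : IsSign s) :
    (cochains N (Set.Iic σ) (#σ - 1)).map (LinearMap.proj σ ∘ₗ coboundary s (Set.Iic σ)) =
      rad N σ := by
  apply le_antisymm
  · rintro - ⟨b, hb, rfl⟩
    rw [LinearMap.comp_apply, LinearMap.proj_apply, coboundary_apply_of_mem s b Set.self_mem_Iic]
    exact sum_mem fun v hv ↦ Submodule.smul_mem _ _ <|
      le_iSup₂ (f := fun v _ ↦ N (σ.erase v)) v hv (mem_cochains.1 hb _).1
  · refine iSup₂_le fun v hv x hx ↦ ⟨Pi.single (σ.erase v) (s v σ • x),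
      mem_cochains.2 fun γ ↦ ?_, ?_⟩
    · obtain rfl | hγ := eq_or_ne γ (σ.erase v)
      · rw [Pi.single_eq_same]
        refine ⟨Submodule.smul_mem _ _ hx, fun _ ↦ ⟨erase_subset v σ, ?_⟩⟩
        rw [← card_erase_add_one hv, Nat.cast_succ, add_sub_cancel_right]
      · simp [Pi.single_eq_of_ne hγ, zero_mem]
    · rw [LinearMap.comp_apply, LinearMap.proj_apply, coboundary_apply_of_mem s _ Set.self_mem_Iic,
        sum_eq_single_of_mem v hv fun w hw hwv ↦ ?_]
      · rw [Pi.single_eq_same, smul_smul, hs.sq, one_smul]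
      · rw [Pi.single_eq_of_ne fun h ↦ hwv (erase_injOn σ hw hv h), smul_zero]

theorem exists_coboundary_eq_iff (hs : IsSign s) (hN : Monotone N) {c : Finset V → W}
    (hc : c ∈ cochains N (Set.Iic σ) #σ) :
    (∃ b ∈ cochains N (Set.Iic σ) (#σ - 1), coboundary s (Set.Iic σ) b = c) ↔ c σ ∈ rad N σ := by
  rw [← map_coboundary_eq_rad hs]
  refine exists_congr fun b ↦ and_congr_right fun hb ↦ ⟨fun h ↦ congrFun h σ, fun h ↦ ?_⟩
  have hdb := coboundary_mem_cochains (s := s) hN hb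
  rw [sub_add_cancel] at hdb
  funext γ
  obtain rfl | hγ := eq_or_ne γ σ
  · exact h
  · have hcard (hle : γ ∈ Set.Iic σ) : (#γ : ℤ) ≠ #σ :=
      fun hcard ↦ hγ (eq_of_subset_of_card_le hle (by lia))
    rw [cochains_apply_eq_zero hc hcard, cochains_apply_eq_zero hdb hcard]

theorem cubeExactAt_card_iff (hs : IsSign s) (hN : Monotone N) :
    CubeExactAt s N (Set.Iic σ) #σ ↔ N σ ≤ rad N σ := by
  constructor
  · intro h x hx
    have hsingle : Pi.single σ x ∈ cochains N (Set.Iic σ) #σ := by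
      refine mem_cochains.2 fun γ ↦ ?_
      obtain rfl | hγ := eq_or_ne γ σ
      · simpa using hx
      · simp [Pi.single_eq_of_ne hγ, zero_mem]
    have hdsingle : coboundary s (Set.Iic σ) (Pi.single σ x) = 0 := funext fun γ ↦
      cochains_apply_eq_zero (coboundary_mem_cochains hN hsingle) fun hγ hcard ↦ by
        have := card_le_card hγ
        lia
    simpa using (exists_coboundary_eq_iff hs hN hsingle).1 (h _ hsingle hdsingle)
  · exact fun h c hc _ ↦ (exists_coboundary_eq_iff hs hN hc).2 (h (mem_cochains.1 hc σ).1)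

end Rad

section MinimalGenerators

variable {V K W ι : Type*} [Field K] [AddCommGroup W] [Module K W]
  {N : Finset V → Submodule K W} {sg : ι → Finset V} {w : ι → W}

/-- The free squarefree module on generators of degrees `sg k`: its component of degree `σ` consists
of the vectors supported on the generators whose degree is contained in `σ`. -/
def freePart (K : Type*) [Field K] (sg : ι → Finset V) (σ : Finset V) : Submodule K (ι → K) :=
  Submodule.pi Set.univ fun k ↦ constOn K K (Set.Ici (sg k)) σ

theorem mem_freePart {f : ι → K} {σ : Finset V} :
    f ∈ freePart K sg σ ↔ ∀ k, f k ≠ 0 → sg k ⊆ σ := by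
  simp only [freePart, Submodule.mem_pi, Set.mem_univ, true_imp_iff]
  refine forall_congr' fun k ↦ ?_
  by_cases h : σ ∈ Set.Ici (sg k)
  · exact iff_of_true (constOn_of_mem (R := K) (W := K) h ▸ trivial) fun _ ↦ h
  · rw [constOn_of_notMem h, Submodule.mem_bot]
    exact ⟨fun h0 hk ↦ absurd h0 hk, fun hk ↦ by_contra fun h0 ↦ h (hk h0)⟩

theorem single_mem_freePart [DecidableEq ι] {k : ι} {σ : Finset V} (hk : sg k ⊆ σ) (a : K) :
    Pi.single k a ∈ freePart K sg σ :=
  mem_freePart.2 fun l hl ↦ by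
    obtain rfl : l = k := by_contra fun hlk ↦ hl (by simp [hlk])
    exact hk

theorem freePart_mono : Monotone (freePart K sg) :=
  fun _ _ h _ hf ↦ mem_freePart.2 fun k hk ↦ (mem_freePart.1 hf k hk).trans h

/-- The relations between the vectors `w k` of degree `sg k`. -/
def relations [Fintype ι] (sg : ι → Finset V) (w : ι → W) (σ : Finset V) : Submodule K (ι → K) :=
  freePart K sg σ ⊓ LinearMap.ker (Fintype.linearCombination K w)

theorem relations_mono [Fintype ι] : Monotone (relations (K := K) sg w) :=
  fun _ _ h ↦ inf_le_inf_right _ (freePart_mono h)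

variable [DecidableEq V]

/-- The vectors `w k ∈ N (sg k)` form a minimal system of generators of the monotone family `N`:
those of degree `σ` are a basis of `N σ` modulo `rad N σ`. -/
structure IsMinGenerating (N : Finset V → Submodule K W) (sg : ι → Finset V) (w : ι → W) :
    Prop where
  mem : ∀ k, w k ∈ N (sg k)
  le_span_sup_rad : ∀ σ, N σ ≤ Submodule.span K (w '' {k | sg k = σ}) ⊔ rad N σ
  linearIndepOn : ∀ σ, LinearIndepOn K ((rad N σ).mkQ ∘ w) {k | sg k = σ}

theorem exists_isMinGenerating [Finite V] [FiniteDimensional K W] (N : Finset V → Submodule K W) :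
    ∃ (m : ℕ) (sg : Fin m → Finset V) (w : Fin m → W), IsMinGenerating N sg w := by
  have hbasis (σ : Finset V) : ∃ B ⊆ (N σ : Set W), N σ ≤ Submodule.span K B ⊔ rad N σ ∧
      LinearIndepOn K (rad N σ).mkQ B := by
    obtain ⟨B, hBN, -, hspan, hB⟩ :=
      exists_linearIndepOn_extension (linearIndepOn_empty K (rad N σ).mkQ)
        (Set.empty_subset (N σ : Set W))
    refine ⟨B, hBN, fun x hx ↦ ?_, hB⟩
    rw [sup_comm, ← Submodule.comap_map_mkQ, Submodule.mem_comap, Submodule.map_span]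
    exact hspan (Set.mem_image_of_mem _ hx)
  choose B hBN hspan hB using hbasis
  have hfin (σ : Finset V) : Finite (B σ) := (hB σ).finite
  obtain ⟨m, ⟨e⟩⟩ := Finite.exists_equiv_fin (Σ σ, B σ)
  refine ⟨m, fun k ↦ (e.symm k).1, fun k ↦ (e.symm k).2, fun k ↦ hBN _ (e.symm k).2.2,
    fun σ ↦ (hspan σ).trans (sup_le_sup_right (Submodule.span_mono fun x hx ↦ ?_) _), fun σ ↦ ?_⟩
  · exact ⟨e ⟨σ, x, hx⟩, by simp, congrArg (fun p ↦ (p.2 : W)) (e.symm_apply_apply _)⟩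
  · have hinj : Set.InjOn (fun k ↦ ((e.symm k).2 : W)) {k | (e.symm k).1 = σ} := by
      rintro k rfl l hl hkl
      exact e.symm.injective (Sigma.subtype_ext hl.symm hkl)
    refine ((hB σ).mono ?_).comp_of_image hinj
    rintro - ⟨k, rfl, rfl⟩
    exact (e.symm k).2.2

theorem cubeExactAt_freePart {s : V → Finset V → K} (hs : IsSign s) {σ : Finset V} {j : ℤ}
    (hj : j < #σ) : CubeExactAt s (freePart K sg) (Set.Iic σ) j := by
  refine cubeExactAt_pi.2 fun k ↦ (cubeExactAt_constOn (isUpperSet_Ici _)).2 ?_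
  rw [Set.inter_comm, Set.Ici_inter_Iic]
  by_cases h : sg k ⊂ σ
  · exact cubeExactAt_top_Icc hs h
  · refine cubeExactAt_of_card_ne fun γ hγ hcard ↦ ?_
    have := card_le_card (eq_of_le_of_not_lt (hγ.1.trans hγ.2) h ▸ hγ.1)
    lia

namespace IsMinGenerating

theorem exists_eq_iff (h : IsMinGenerating N sg w) {σ : Finset V} :
    (∃ k, sg k = σ) ↔ ¬ N σ ≤ rad N σ := by
  constructor
  · rintro ⟨k, rfl⟩ hk
    refine (h.linearIndepOn (sg k)).ne_zero (i := k) rfl ?_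
    simpa using hk (h.mem k)
  · contrapose!
    intro hσ
    simpa [hσ] using h.le_span_sup_rad σ

variable [Fintype ι]

theorem map_freePart (h : IsMinGenerating N sg w) (hN : Monotone N) (σ : Finset V) :
    (freePart K sg σ).map (Fintype.linearCombination K w) = N σ := by
  classical
  apply le_antisymm
  · rintro - ⟨f, hf, rfl⟩
    rw [Fintype.linearCombination_apply]
    refine sum_mem fun k _ ↦ ?_
    by_cases hk : f k = 0
    · simp [hk]
    · exact Submodule.smul_mem _ _ (hN (mem_freePart.1 hf k hk) (h.mem k))
  · induction σ using Finset.strongInduction with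
    | H σ ih =>
      refine (h.le_span_sup_rad σ).trans (sup_le (Submodule.span_le.2 ?_) (iSup₂_le fun v hv ↦ ?_))
      · rintro - ⟨k, rfl, rfl⟩
        exact ⟨Pi.single k 1, single_mem_freePart Subset.rfl 1, by simp⟩
      · exact (ih _ (erase_ssubset hv)).trans <|
          Submodule.map_mono (freePart_mono (erase_subset v σ))

theorem ssubset_of_mem_relations (h : IsMinGenerating N sg w) (hN : Monotone N) {σ : Finset V}
    {f : ι → K} (hf : f ∈ relations sg w σ) {k : ι} (hk : f k ≠ 0) : sg k ⊂ σ := by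
  classical
  refine (mem_freePart.1 hf.1 k hk).ssubset_of_ne fun hkσ ↦ hk ?_
  have hsum : ∑ l with sg l = σ, f l • (rad N σ).mkQ (w l) = 0 := by
    have hf0 : (rad N σ).mkQ (Fintype.linearCombination K w f) = 0 := by
      rw [LinearMap.mem_ker.1 hf.2, map_zero]
    refine (sum_filter _ _).trans (Eq.trans ?_ hf0)
    rw [Fintype.linearCombination_apply, map_sum]
    refine sum_congr rfl fun l _ ↦ ?_
    rw [map_smul]
    split_ifs with hl
    · rfl
    · by_cases hfl : f l = 0
      · simp [hfl]
      · have := le_rad_of_ssubset hN ((mem_freePart.1 hf.1 l hfl).ssubset_of_ne hl) (h.mem l)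
        rw [Submodule.mkQ_apply, (Submodule.Quotient.mk_eq_zero _).2 this, smul_zero]
  have hindep := h.linearIndepOn σ
  rw [← coe_filter_univ, linearIndepOn_finset_iff] at hindep
  exact hindep f hsum k (by simpa using hkσ)

theorem relations_le_rad (h : IsMinGenerating N sg w) (hN : Monotone N) (σ : Finset V) :
    relations sg w σ ≤ rad (freePart K sg) σ := by
  classical
  intro f hf
  rw [← univ_sum_single f]
  refine sum_mem fun k _ ↦ ?_
  by_cases hk : f k = 0
  · simp [hk]
  · exact le_rad_of_ssubset freePart_mono (h.ssubset_of_mem_relations hN hf hk)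
      (single_mem_freePart Subset.rfl _)

theorem cubeExactAt_relations_iff (h : IsMinGenerating N sg w) (hN : Monotone N)
    {s : V → Finset V → K} (hs : IsSign s) {σ : Finset V} {j : ℤ} (hj : j ≤ #σ) :
    CubeExactAt s (relations sg w) (Set.Iic σ) j ↔ CubeExactAt s N (Set.Iic σ) (j - 1) := by
  have hse := isShortExact_map hs (freePart_mono (K := K) (sg := sg))
    (Set.ordConnected_Iic (a := σ)) (Fintype.linearCombination K w)
  simp only [h.map_freePart hN] at hse
  have hle (i : ℤ) :
      cochains (relations sg w) (Set.Iic σ) i ≤ cochains (freePart K sg) (Set.Iic σ) i :=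
    hse.inf_ker i ▸ inf_le_left
  constructor
  · intro hrel
    rw [← sub_add_cancel j 1] at hrel
    exact hse.exactAt_right (cubeExactAt_freePart hs (by lia)) hrel
  · refine fun hN' ↦ hse.exactAt_left hN' fun c hc hdc ↦ ?_
    obtain rfl | hj := hj.eq_or_lt
    · exact (exists_coboundary_eq_iff hs freePart_mono (hle _ hc)).2 <|
        h.relations_le_rad hN σ (mem_cochains.1 hc σ).1
    · exact cubeExactAt_freePart hs hj c (hle _ hc) hdc

end IsMinGenerating

end MinimalGenerators

section Syzygies

/-- A squarefree submodule of a free squarefree module of finite rank: `deg` lists the degrees of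
the basis elements, and `part σ` is the component of degree `σ` of the submodule. The last field
says that the submodule lies in the product of the maximal ideal and the free module. -/
structure SqfreeSubmodule (V K : Type*) [Field K] where
  rank : ℕ
  deg : Fin rank → Finset V
  part : Finset V → Submodule K (Fin rank → K)
  monotone_part : Monotone part
  ssubset_of_mem : ∀ ⦃σ f k⦄, f ∈ part σ → f k ≠ 0 → deg k ⊂ σ

namespace SqfreeSubmodule

variable {V K : Type*} [DecidableEq V] [Finite V] [Field K] (S : SqfreeSubmodule V K)

/-- The number of minimal generators. -/
noncomputable def genRank : ℕ :=
  (exists_isMinGenerating S.part).choose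

/-- The degrees of the chosen minimal generators. -/
noncomputable def genDeg : Fin S.genRank → Finset V :=
  (exists_isMinGenerating S.part).choose_spec.choose

/-- A choice of minimal generators. -/
noncomputable def gen : Fin S.genRank → Fin S.rank → K :=
  (exists_isMinGenerating S.part).choose_spec.choose_spec.choose

theorem isMinGenerating_gen : IsMinGenerating S.part S.genDeg S.gen :=
  (exists_isMinGenerating S.part).choose_spec.choose_spec.choose_spec

/-- The module of relations between the minimal generators. -/
noncomputable def syzygy : SqfreeSubmodule V K where
  rank := S.genRank
  deg := S.genDeg
  part := relations S.genDeg S.gen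
  monotone_part := relations_mono
  ssubset_of_mem _ _ _ hf hk :=
    S.isMinGenerating_gen.ssubset_of_mem_relations S.monotone_part hf hk

/-- The `i`-th syzygy module. -/
noncomputable def syzygies : ℕ → SqfreeSubmodule V K
  | 0 => S
  | i + 1 => (syzygies i).syzygy

variable {S}

theorem cubeExactAt_syzygies_iff {s : V → Finset V → K} (hs : IsSign s) (i : ℕ) {σ : Finset V}
    {j : ℤ} (hj : j ≤ #σ) :
    CubeExactAt s (S.syzygies i).part (Set.Iic σ) j ↔
      CubeExactAt s S.part (Set.Iic σ) (j - i) := by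
  induction i generalizing j with
  | zero => simp [syzygies]
  | succ i ih =>
    refine ((S.syzygies i).isMinGenerating_gen.cubeExactAt_relations_iff
      (S.syzygies i).monotone_part hs hj).trans ?_
    rw [ih (by lia), sub_sub, Nat.cast_succ, add_comm 1]

theorem exists_deg_syzygies_eq_iff {s : V → Finset V → K} (hs : IsSign s) {i : ℕ}
    {σ : Finset V} :
    (∃ k, (S.syzygies (i + 1)).deg k = σ) ↔ ¬ CubeExactAt s S.part (Set.Iic σ) (#σ - i) := by
  rw [← cubeExactAt_syzygies_iff hs i le_rfl, cubeExactAt_card_iff hs (S.syzygies i).monotone_part]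
  exact (S.syzygies i).isMinGenerating_gen.exists_eq_iff

theorem rank_syzygies_eq_zero {s : V → Finset V → K} (hs : IsSign s) {i : ℕ}
    (hi : Nat.card V < i) : (S.syzygies (i + 1)).rank = 0 := by
  cases nonempty_fintype V
  refine Nat.eq_zero_of_not_pos fun hpos ↦
    (exists_deg_syzygies_eq_iff hs).1 ⟨⟨0, hpos⟩, rfl⟩ <| cubeExactAt_of_card_ne fun γ _ hγ ↦ ?_
  have := card_le_univ ((S.syzygies (i + 1)).deg ⟨0, hpos⟩)
  rw [Nat.card_eq_fintype_card] at hi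
  lia

end SqfreeSubmodule

end Syzygies

section FineGrading

variable {V K ι κ : Type*}

/-- The exponent of the squarefree monomial with support `τ`. -/
noncomputable def sqfreeExponent (τ : Finset V) : V →₀ ℕ :=
  ∑ v ∈ τ, Finsupp.single v 1

theorem sqfreeExponent_le_iff {τ : Finset V} {a : V →₀ ℕ} :
    sqfreeExponent τ ≤ a ↔ τ ⊆ a.support := by
  classical
  simp only [Finsupp.le_def, sqfreeExponent, Finsupp.finsetSum_apply, Finsupp.single_apply,
    sum_ite_eq', subset_iff, Finsupp.mem_support_iff, ← Nat.one_le_iff_ne_zero]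
  refine forall_congr' fun v ↦ ?_
  split_ifs with h <;> simp [h]

theorem degree_sqfreeExponent (τ : Finset V) : (sqfreeExponent τ).degree = #τ := by
  simp [sqfreeExponent]

theorem sqfreeExponent_eq_zero_iff {τ : Finset V} : sqfreeExponent τ = 0 ↔ τ = ∅ := by
  rw [← Finsupp.degree_eq_zero_iff, degree_sqfreeExponent, card_eq_zero]

theorem sqfreeExponent_sdiff_add [DecidableEq V] {σ τ : Finset V} (h : σ ⊆ τ) :
    sqfreeExponent (τ \ σ) + sqfreeExponent σ = sqfreeExponent τ :=
  sum_sdiff h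

variable [Field K] {sg : ι → Finset V} {dg : κ → Finset V} {w : ι → κ → K}
  {a b : V →₀ ℕ}

/-- The component of fine degree `a` of an element of the free module on generators of degrees
`sg k`, as the vector of its coefficients. -/
noncomputable def fineComponent (K : Type*) [Field K] (sg : ι → Finset V) (a : V →₀ ℕ) :
    (ι → MvPolynomial V K) →ₗ[K] (ι → K) :=
  LinearMap.pi fun k ↦
    lcoeff K a ∘ₗ LinearMap.mulLeft K (monomial (sqfreeExponent (sg k)) 1) ∘ₗ LinearMap.proj k

theorem fineComponent_apply (f : ι → MvPolynomial V K) (k : ι) :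
    fineComponent K sg a f k = coeff a (monomial (sqfreeExponent (sg k)) 1 * f k) :=
  rfl

theorem fineComponent_mem_freePart (f : ι → MvPolynomial V K) :
    fineComponent K sg a f ∈ freePart K sg a.support := by
  refine mem_freePart.2 fun k hk ↦ sqfreeExponent_le_iff.1 (by_contra fun h ↦ hk ?_)
  rw [fineComponent_apply, coeff_monomial_mul', if_neg h]

theorem ext_fineComponent (sg : ι → Finset V) {f g : ι → MvPolynomial V K}
    (h : ∀ a, fineComponent K sg a f = fineComponent K sg a g) : f = g := by
  ext k b
  have := congrFun (h (sqfreeExponent (sg k) + b)) k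
  simpa only [fineComponent_apply, coeff_monomial_mul, one_mul] using this

/-- The element with fine degree `a` and vector of coefficients `u`. -/
noncomputable def ofFineComponent (sg : ι → Finset V) (a : V →₀ ℕ) (u : ι → K) :
    ι → MvPolynomial V K :=
  fun k ↦ monomial (a - sqfreeExponent (sg k)) (u k)

theorem fineComponent_ofFineComponent [DecidableEq (V →₀ ℕ)] {u : ι → K}
    (hu : u ∈ freePart K sg a.support) :
    fineComponent K sg b (ofFineComponent sg a u) = if a = b then u else 0 := by
  funext k
  rw [fineComponent_apply, ofFineComponent, monomial_mul, one_mul]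
  by_cases hk : u k = 0
  · split_ifs <;> simp [hk]
  · classical
    rw [add_tsub_cancel_of_le (sqfreeExponent_le_iff.2 (mem_freePart.1 hu k hk)), coeff_monomial]
    split_ifs <;> rfl

theorem exists_sum_ofFineComponent [Finite ι] (sg : ι → Finset V) (f : ι → MvPolynomial V K) :
    ∃ A : Finset (V →₀ ℕ), ∑ a ∈ A, ofFineComponent sg a (fineComponent K sg a f) = f := by
  classical
  cases nonempty_fintype ι
  refine ⟨univ.biUnion fun k ↦ (monomial (sqfreeExponent (sg k)) 1 * f k).support,
    ext_fineComponent sg fun b ↦ ?_⟩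
  simp only [map_sum, fineComponent_ofFineComponent (fineComponent_mem_freePart f), sum_ite_eq']
  refine ite_eq_left_iff.2 fun hb ↦ (funext fun k ↦ ?_).symm
  rw [fineComponent_apply]
  exact notMem_support_iff.1 fun h ↦ hb (mem_biUnion.2 ⟨k, mem_univ k, h⟩)

variable [DecidableEq V] [Fintype ι]

/-- The homogeneous map of free modules sending the `k`-th generator, of degree `sg k`, to the
element of the same degree with coefficients `w k`. -/
noncomputable def homogenize (sg : ι → Finset V) (dg : κ → Finset V) (w : ι → κ → K) :
    (ι → MvPolynomial V K) →ₗ[MvPolynomial V K] (κ → MvPolynomial V K) :=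
  Fintype.linearCombination (MvPolynomial V K) fun k j ↦
    monomial (sqfreeExponent (sg k \ dg j)) (w k j)

theorem homogenize_single [DecidableEq ι] (k : ι) (j : κ) :
    homogenize sg dg w (Pi.single k 1) j = monomial (sqfreeExponent (sg k \ dg j)) (w k j) := by
  simp [homogenize]

theorem fineComponent_homogenize (hw : ∀ k, w k ∈ freePart K dg (sg k))
    (f : ι → MvPolynomial V K) :
    fineComponent K dg a (homogenize sg dg w f) =
      Fintype.linearCombination K w (fineComponent K sg a f) := by
  funext j
  simp only [homogenize, Fintype.linearCombination_apply, fineComponent_apply, Finset.sum_apply,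
    Pi.smul_apply, smul_eq_mul, mul_sum, coeff_sum]
  refine sum_congr rfl fun k _ ↦ ?_
  rw [mul_left_comm, monomial_mul, one_mul]
  by_cases hk : w k j = 0
  · simp [hk]
  · rw [add_comm, sqfreeExponent_sdiff_add (mem_freePart.1 (hw k) j hk),
      ← mul_one (w k j), ← C_mul_monomial, mul_left_comm, coeff_C_mul, mul_comm (f k),
      mul_one, mul_comm]

theorem mem_ker_homogenize (hw : ∀ k, w k ∈ freePart K dg (sg k))
    {f : ι → MvPolynomial V K} :
    f ∈ LinearMap.ker (homogenize sg dg w) ↔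
      ∀ a, fineComponent K sg a f ∈ relations sg w a.support := by
  constructor
  · intro hf a
    refine ⟨fineComponent_mem_freePart f, ?_⟩
    exact LinearMap.mem_ker.2 <| by
      rw [← fineComponent_homogenize hw, LinearMap.mem_ker.1 hf, map_zero]
  · intro h
    refine LinearMap.mem_ker.2 (ext_fineComponent dg fun a ↦ ?_)
    rw [fineComponent_homogenize hw, LinearMap.mem_ker.1 (h a).2, map_zero]

theorem mem_range_homogenize [Finite κ] (hw : ∀ k, w k ∈ freePart K dg (sg k))
    {N : Finset V → Submodule K (κ → K)}
    (hmap : ∀ σ, (freePart K sg σ).map (Fintype.linearCombination K w) = N σ)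
    {f : κ → MvPolynomial V K} :
    f ∈ LinearMap.range (homogenize sg dg w) ↔ ∀ a, fineComponent K dg a f ∈ N a.support := by
  classical
  constructor
  · rintro ⟨g, rfl⟩ a
    rw [fineComponent_homogenize hw, ← hmap]
    exact Submodule.mem_map_of_mem (fineComponent_mem_freePart g)
  · intro h
    obtain ⟨A, hA⟩ := exists_sum_ofFineComponent dg f
    rw [← hA]
    refine sum_mem fun a _ ↦ ?_
    obtain ⟨u, hu, hfu⟩ := hmap a.support ▸ h a
    refine ⟨ofFineComponent sg a u, ext_fineComponent dg fun b ↦ ?_⟩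
    rw [fineComponent_homogenize hw, fineComponent_ofFineComponent hu,
      fineComponent_ofFineComponent (fineComponent_mem_freePart f), ← hfu]
    split_ifs
    · rfl
    · exact map_zero _

end FineGrading

section SquarefreeIdeal

variable {V K : Type*} [Field K] {U : UpperSet (Finset V)}

/-- The ideal generated by the squarefree monomials whose support lies in `U`. -/
noncomputable def sqfreeIdeal (K : Type*) [Field K] (U : UpperSet (Finset V)) :
    Ideal (MvPolynomial V K) :=
  Ideal.span ((fun σ ↦ monomial (sqfreeExponent σ) 1) '' U)

theorem mem_span_sqfree_iff {S : Set (Finset V)} {p : MvPolynomial V K} :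
    p ∈ Ideal.span ((fun σ ↦ monomial (sqfreeExponent σ) (1 : K)) '' S) ↔
      ∀ a, coeff a p ≠ 0 → a.support ∈ upperClosure S := by
  rw [← Set.image_image (fun a : V →₀ ℕ ↦ monomial a (1 : K)), mem_ideal_span_monomial_image]
  refine forall_congr' fun a ↦ imp_congr mem_support_iff ?_
  rw [Set.exists_mem_image, mem_upperClosure]
  exact exists_congr fun σ ↦ and_congr_right fun _ ↦ sqfreeExponent_le_iff

theorem mem_sqfreeIdeal {p : MvPolynomial V K} :
    p ∈ sqfreeIdeal K U ↔ ∀ a, coeff a p ≠ 0 → a.support ∈ U := by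
  rw [sqfreeIdeal, mem_span_sqfree_iff, UpperSet.upperClosure]

theorem homogeneousComponent_mem_sqfreeIdeal {p : MvPolynomial V K} (hp : p ∈ sqfreeIdeal K U)
    (t : ℕ) : homogeneousComponent t p ∈ sqfreeIdeal K U :=
  mem_sqfreeIdeal.2 fun a ha ↦ mem_sqfreeIdeal.1 hp a <| by
    rw [coeff_homogeneousComponent] at ha
    exact (ite_ne_right_iff.1 ha).2

theorem sqfreeIdeal_eq_top (h : ∅ ∈ U) : sqfreeIdeal K U = ⊤ :=
  eq_top_iff.2 fun _ _ ↦ mem_sqfreeIdeal.2 fun _ _ ↦ U.upper (empty_subset _) h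

theorem sqfreeIdeal_eq_bot [Fintype V] (h : univ ∉ U) : sqfreeIdeal K U = ⊥ :=
  eq_bot_iff.2 fun _ hp ↦ MvPolynomial.ext _ _ fun a ↦ by_contra fun ha ↦
    h (U.upper (subset_univ _) (mem_sqfreeIdeal.1 hp a ha))

/-- The ideal `sqfreeIdeal K U` as a submodule of the free module of rank one. -/
def SqfreeSubmodule.ofUpperSet (K : Type*) [Field K] (U : UpperSet (Finset V)) (hU : ∅ ∉ U) :
    SqfreeSubmodule V K where
  rank := 1
  deg _ := ∅
  part σ := Submodule.pi Set.univ fun _ ↦ constOn K K U σ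
  monotone_part _ _ h := by
    have hU : Monotone (constOn K K (U : Set (Finset V))) := constOn_mono U.upper
    exact Submodule.pi_mono fun _ _ ↦ hU h
  ssubset_of_mem σ f k hf hk := by
    refine (empty_subset σ).ssubset_of_ne fun hσ ↦ hk ?_
    subst hσ
    have hfk : f k ∈ constOn K K (U : Set (Finset V)) ∅ := hf k trivial
    rwa [constOn_of_notMem hU, Submodule.mem_bot] at hfk

theorem mem_part_ofUpperSet {hU : ∅ ∉ U} {σ : Finset V} {f : Fin 1 → K} :
    f ∈ (SqfreeSubmodule.ofUpperSet K U hU).part σ ↔ (f 0 ≠ 0 → σ ∈ U) := by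
  change f ∈ Submodule.pi Set.univ (fun _ ↦ constOn K K (U : Set (Finset V)) σ) ↔ _
  rw [Submodule.mem_pi, Fin.forall_fin_one, imp_iff_right (Set.mem_univ _)]
  by_cases h : σ ∈ U
  · simp [constOn_of_mem (F := (U : Set (Finset V))) h, h]
  · simp [constOn_of_notMem (F := (U : Set (Finset V))) h, h]

theorem forall_fineComponent_mem_ofUpperSet_iff {hU : ∅ ∉ U} {f : Fin 1 → MvPolynomial V K} :
    (∀ a, fineComponent K (fun _ ↦ ∅) a f ∈
      (SqfreeSubmodule.ofUpperSet K U hU).part a.support) ↔ f 0 ∈ sqfreeIdeal K U := by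
  refine Iff.trans (forall_congr' fun a ↦ ?_) mem_sqfreeIdeal.symm
  have hcomp : fineComponent K (fun _ : Fin 1 ↦ ∅) a f 0 = coeff a (f 0) := by
    simp [fineComponent_apply, sqfreeExponent]
  rw [mem_part_ofUpperSet, hcomp]

end SquarefreeIdeal

section Resolution

namespace SqfreeSubmodule

variable {V K : Type*} [DecidableEq V] [Finite V] [Field K] (S : SqfreeSubmodule V K)

/-- The homogeneous map of free modules which sends the generators to the chosen minimal
generators of `S`. -/
noncomputable def presentation :
    (Fin S.genRank → MvPolynomial V K) →ₗ[MvPolynomial V K] (Fin S.rank → MvPolynomial V K) :=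
  homogenize S.genDeg S.deg S.gen

variable {S}

theorem deg_ssubset_genDeg {k : Fin S.genRank} {j : Fin S.rank} (h : S.gen k j ≠ 0) :
    S.deg j ⊂ S.genDeg k :=
  S.ssubset_of_mem (S.isMinGenerating_gen.mem k) h

theorem gen_mem_freePart (k : Fin S.genRank) : S.gen k ∈ freePart K S.deg (S.genDeg k) :=
  mem_freePart.2 fun _ hj ↦ (deg_ssubset_genDeg hj).subset

theorem mem_range_presentation {f : Fin S.rank → MvPolynomial V K} :
    f ∈ LinearMap.range S.presentation ↔ ∀ a, fineComponent K S.deg a f ∈ S.part a.support :=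
  mem_range_homogenize gen_mem_freePart (S.isMinGenerating_gen.map_freePart S.monotone_part)

theorem range_presentation_syzygy :
    LinearMap.range S.syzygy.presentation = LinearMap.ker S.presentation :=
  SetLike.ext fun _ ↦ mem_range_presentation.trans (mem_ker_homogenize gen_mem_freePart).symm

theorem presentation_single (k : Fin S.genRank) (j : Fin S.rank) :
    S.presentation (Pi.single k 1) j =
      monomial (sqfreeExponent (S.genDeg k \ S.deg j)) (S.gen k j) :=
  homogenize_single k j

theorem isHomogeneous_presentation_single (k : Fin S.genRank) (j : Fin S.rank) :
    S.presentation (Pi.single k 1) j = 0 ∨ #(S.deg j) ≤ #(S.genDeg k) ∧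
      (S.presentation (Pi.single k 1) j).IsHomogeneous (#(S.genDeg k) - #(S.deg j)) := by
  rw [presentation_single]
  by_cases h : S.gen k j = 0
  · exact Or.inl (by rw [h, monomial_zero])
  · have hsub := (deg_ssubset_genDeg h).subset
    exact Or.inr ⟨card_le_card hsub,
      isHomogeneous_monomial _ (by rw [degree_sqfreeExponent, card_sdiff_of_subset hsub])⟩

theorem constantCoeff_presentation_single (k : Fin S.genRank) (j : Fin S.rank) :
    constantCoeff (S.presentation (Pi.single k 1) j) = 0 := by
  rw [presentation_single, constantCoeff_monomial, ite_eq_right_iff, sqfreeExponent_eq_zero_iff,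
    sdiff_eq_empty_iff_subset]
  exact fun h ↦ by_contra fun hkj ↦ (deg_ssubset_genDeg hkj).2 h

end SqfreeSubmodule

open SqfreeSubmodule in
/-- The minimal free resolution of a squarefree monomial ideal. -/
noncomputable def sqfreeResolution {n : ℕ} (K : Type) [Field K] (U : UpperSet (Finset (Fin n)))
    (hU : ∅ ∉ U) : GFR n K (sqfreeIdeal K U) where
  len := n + 1
  rk i := ((ofUpperSet K U hU).syzygies i).rank
  rk_zero
    | i + 1, hi => rank_syzygies_eq_zero (isSign_standardSign K) (by simpa using hi)
  tw i k := #(((ofUpperSet K U hU).syzygies i).deg k)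
  δ i := ((ofUpperSet K U hU).syzygies i).presentation
  δ_homog _ := isHomogeneous_presentation_single
  aug := LinearMap.proj (0 : Fin 1)
  aug_homog
    | (0 : Fin 1) => by
      change MvPolynomial.IsHomogeneous ((Pi.single 0 1 : Fin 1 → MvPolynomial (Fin n) K) 0) 0
      rw [Pi.single_eq_same]
      exact isHomogeneous_one _ _
  aug_surj r := ⟨fun _ ↦ r, by
    change r - r ∈ _
    exact (sub_self r).symm ▸ zero_mem _⟩
  exact_zero := SetLike.ext fun _ ↦ mem_range_presentation.trans <|
    forall_fineComponent_mem_ofUpperSet_iff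
  exact_succ _ := range_presentation_syzygy

end Resolution

namespace GFR

variable {n : ℕ} {K : Type} [Field K]

/-- A graded free resolution is minimal if no entry of its differentials has a constant term. -/
def IsMinimal {I : Ideal (MvPolynomial (Fin n) K)} (F : GFR n K I) : Prop :=
  ∀ i k j, constantCoeff (F.δ i (Pi.single k 1) j) = 0

theorem isMinimal_sqfreeResolution {U : UpperSet (Finset (Fin n))} {hU : ∅ ∉ U} :
    (sqfreeResolution K U hU).IsMinimal :=
  fun _ ↦ SqfreeSubmodule.constantCoeff_presentation_single

theorem forall_tw_zero_sqfreeResolution_iff {U : UpperSet (Finset (Fin n))} {hU : ∅ ∉ U}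
    {p : ℕ → Prop} : (∀ k, p ((sqfreeResolution K U hU).tw 0 k)) ↔ p 0 :=
  forall_const (Fin 1) (b := p 0)

theorem exists_tw_sqfreeResolution_eq_iff {U : UpperSet (Finset (Fin n))} {hU : ∅ ∉ U}
    {s : Fin n → Finset (Fin n) → K} (hs : IsSign s) {i t : ℕ} :
    (∃ k, (sqfreeResolution K U hU).tw (i + 1) k = t) ↔
      ∃ σ : Finset (Fin n), #σ = t ∧ ¬ CubeExactAt s (constOn K K U) (Set.Iic σ) (#σ - i) := by
  have hσ (σ : Finset (Fin n)) := (SqfreeSubmodule.exists_deg_syzygies_eq_iff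
    (S := SqfreeSubmodule.ofUpperSet K U hU) (i := i) (σ := σ) hs).trans
    (not_congr (cubeExactAt_pi.trans (forall_const (Fin 1))))
  exact ⟨fun ⟨k, hk⟩ ↦ ⟨_, hk, (hσ _).1 ⟨k, rfl⟩⟩, fun ⟨σ, hσt, h⟩ ↦
    ((hσ σ).2 h).imp fun k hk ↦ (congrArg card hk).trans hσt⟩

end GFR

section GradedMaps

theorem linearMap_apply_eq_sum_single {A M κ : Type*} [Semiring A] [AddCommMonoid M] [Module A M]
    [Fintype κ] [DecidableEq κ] (f : (κ → A) →ₗ[A] M) (x : κ → A) :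
    f x = ∑ k, x k • f (Pi.single k 1) := by
  conv_lhs => rw [← univ_sum_single x, map_sum]
  exact sum_congr rfl fun k _ ↦ by rw [← map_smul, ← Pi.single_smul, smul_eq_mul, mul_one]

variable {σ A ι κ : Type*} [CommSemiring A]

/-- The projection of `R(-e)` onto its component of degree `t`, where `R` is the polynomial
ring. -/
noncomputable def shiftedComponent (e t : ℕ) : MvPolynomial σ A →ₗ[A] MvPolynomial σ A :=
  if e ≤ t then homogeneousComponent (t - e) else 0

theorem homogeneousComponent_mul_of_isHomogeneous {p q : MvPolynomial σ A} {d : ℕ}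
    (hp : p.IsHomogeneous d) (m : ℕ) :
    homogeneousComponent m (q * p) = if d ≤ m then homogeneousComponent (m - d) q * p else 0 := by
  let _ := MvPolynomial.gradedAlgebra (σ := σ) (R := A)
  have hdec (r : MvPolynomial σ A) (i : ℕ) :
      (DirectSum.decompose (homogeneousSubmodule σ A) r i : MvPolynomial σ A) =
        homogeneousComponent i r :=
    decomposition.decompose'_apply r i
  simpa only [hdec] using
    DirectSum.coe_decompose_mul_of_right_mem (homogeneousSubmodule σ A) m (a := q) hp

theorem shiftedComponent_eq_self_iff {e t : ℕ} {p : MvPolynomial σ A} :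
    shiftedComponent e t p = p ↔ p = 0 ∨ e ≤ t ∧ p.IsHomogeneous (t - e) := by
  unfold shiftedComponent
  split_ifs with h
  · simp only [h, true_and]
    exact ⟨fun hp ↦ Or.inr (hp ▸ homogeneousComponent_isHomogeneous _ _),
      fun hp ↦ hp.elim (fun h0 ↦ by rw [h0, map_zero]) fun hp ↦ homogeneousComponent_eq_self hp⟩
  · simp [h, eq_comm]

theorem shiftedComponent_mul {e d : ℕ} {p : MvPolynomial σ A} (hp : shiftedComponent e d p = p)
    (t : ℕ) (q : MvPolynomial σ A) :
    shiftedComponent e t (q * p) = shiftedComponent d t q * p := by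
  obtain rfl | ⟨hed, hp⟩ := shiftedComponent_eq_self_iff.1 hp
  · simp
  · unfold shiftedComponent
    by_cases het : e ≤ t
    · rw [if_pos het, homogeneousComponent_mul_of_isHomogeneous hp]
      by_cases hdt : d ≤ t
      · rw [if_pos hdt, if_pos (by omega), tsub_tsub_tsub_cancel_right hed]
      · rw [if_neg hdt, if_neg (by omega), LinearMap.zero_apply, zero_mul]
    · rw [if_neg het, if_neg (by omega), LinearMap.zero_apply, LinearMap.zero_apply, zero_mul]

theorem shiftedComponent_idem (e t : ℕ) (p : MvPolynomial σ A) :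
    shiftedComponent e t (shiftedComponent e t p) = shiftedComponent e t p := by
  rw [shiftedComponent_eq_self_iff]
  unfold shiftedComponent
  split_ifs with h
  · exact Or.inr ⟨h, homogeneousComponent_isHomogeneous _ _⟩
  · exact Or.inl rfl

/-- The projection of the graded free module `⨁ k, R(-tw k)` onto its component of degree `t`. -/
noncomputable def gradedComponent (tw : κ → ℕ) (t : ℕ) :
    (κ → MvPolynomial σ A) →ₗ[A] (κ → MvPolynomial σ A) :=
  LinearMap.pi fun k ↦ shiftedComponent (tw k) t ∘ₗ LinearMap.proj k

/-- A linear map `⨁ k, R(-tw k) → ⨁ j, R(-tw' j)` is graded if it preserves degrees; this is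
expressed by saying that it commutes with the projections onto the graded components. -/
def IsGraded (tw : κ → ℕ) (tw' : ι → ℕ)
    (f : (κ → MvPolynomial σ A) →ₗ[MvPolynomial σ A] (ι → MvPolynomial σ A)) : Prop :=
  ∀ t x, f (gradedComponent tw t x) = gradedComponent tw' t (f x)

variable {tw : κ → ℕ} {tw' : ι → ℕ}

theorem gradedComponent_single [DecidableEq κ] (k : κ) :
    gradedComponent tw (tw k) (Pi.single k (1 : MvPolynomial σ A)) = Pi.single k 1 := by
  ext1 j
  change shiftedComponent (tw j) (tw k) ((Pi.single k 1 : κ → MvPolynomial σ A) j) = _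
  rw [shiftedComponent_eq_self_iff]
  obtain rfl | hjk := eq_or_ne j k
  · rw [Pi.single_eq_same, Nat.sub_self]
    exact Or.inr ⟨le_rfl, isHomogeneous_one _ _⟩
  · exact Or.inl (Pi.single_eq_of_ne hjk 1)

theorem IsGraded.eq_of_constantCoeff_ne_zero [DecidableEq κ]
    {f : (κ → MvPolynomial σ A) →ₗ[MvPolynomial σ A] (ι → MvPolynomial σ A)}
    (hf : IsGraded tw tw' f) {k : κ} {j : ι}
    (h : constantCoeff (f (Pi.single k 1) j) ≠ 0) : tw' j = tw k := by
  have hfix : shiftedComponent (tw' j) (tw k) (f (Pi.single k 1) j) = f (Pi.single k 1) j := by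
    have := hf (tw k) (Pi.single k 1)
    rw [gradedComponent_single] at this
    exact (congrFun this j).symm
  obtain h0 | ⟨hle, hhom⟩ := shiftedComponent_eq_self_iff.1 hfix
  · simp [h0] at h
  · have : (0 : σ →₀ ℕ).degree = tw k - tw' j := by
      rw [Finsupp.degree_eq_weight_one]
      exact hhom h
    rw [map_zero] at this
    omega

variable [Finite κ]

theorem shiftedComponent_map [DecidableEq κ] {e : ℕ}
    {φ : (κ → MvPolynomial σ A) →ₗ[MvPolynomial σ A] MvPolynomial σ A}
    (h : ∀ k, shiftedComponent e (tw k) (φ (Pi.single k 1)) = φ (Pi.single k 1))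
    (t : ℕ) (x : κ → MvPolynomial σ A) :
    φ (gradedComponent tw t x) = shiftedComponent e t (φ x) := by
  have _ := Fintype.ofFinite κ
  rw [linearMap_apply_eq_sum_single φ, linearMap_apply_eq_sum_single φ x, map_sum]
  exact sum_congr rfl fun k _ ↦ (shiftedComponent_mul (h k) t (x k)).symm

theorem isGraded_of_apply_single [DecidableEq κ]
    {f : (κ → MvPolynomial σ A) →ₗ[MvPolynomial σ A] (ι → MvPolynomial σ A)}
    (h : ∀ k j, shiftedComponent (tw' j) (tw k) (f (Pi.single k 1) j) = f (Pi.single k 1) j) :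
    IsGraded tw tw' f :=
  fun t x ↦ funext fun j ↦ shiftedComponent_map (φ := LinearMap.proj j ∘ₗ f) (fun k ↦ h k j) t x

theorem exists_isGraded_lift {N : Type*} [AddCommMonoid N] [Module (MvPolynomial σ A) N]
    {f : (κ → MvPolynomial σ A) →ₗ[MvPolynomial σ A] N}
    {g : (ι → MvPolynomial σ A) →ₗ[MvPolynomial σ A] N}
    (hrange : LinearMap.range f ≤ LinearMap.range g)
    (hdeg : ∀ t x y, f x = g y → f (gradedComponent tw t x) = g (gradedComponent tw' t y)) :
    ∃ l : (κ → MvPolynomial σ A) →ₗ[MvPolynomial σ A] (ι → MvPolynomial σ A),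
      IsGraded tw tw' l ∧ g ∘ₗ l = f := by
  classical
  have _ := Fintype.ofFinite κ
  have hlift (k : κ) : ∃ y, f (Pi.single k 1) = g (gradedComponent tw' (tw k) y) := by
    obtain ⟨y, hy⟩ := hrange ⟨Pi.single k 1, rfl⟩
    exact ⟨y, by rw [← hdeg _ _ _ hy.symm, gradedComponent_single]⟩
  choose y hy using hlift
  let l := Fintype.linearCombination (MvPolynomial σ A) fun k ↦ gradedComponent tw' (tw k) (y k)
  have hl (k : κ) : l (Pi.single k 1) = gradedComponent tw' (tw k) (y k) := by
    rw [Fintype.linearCombination_apply_single, one_smul]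
  refine ⟨l, isGraded_of_apply_single fun k j ↦ ?_, LinearMap.pi_ext' fun k ↦
    LinearMap.ext_ring ?_⟩
  · rw [hl]
    exact shiftedComponent_idem _ _ _
  · exact (congrArg g (hl k)).trans (hy k).symm

end GradedMaps

section Comparison

theorem exists_comp_eq_of_range_le {A P M N : Type*} [Ring A] [AddCommGroup P] [AddCommGroup M]
    [AddCommGroup N] [Module A P] [Module A M] [Module A N] [Module.Projective A P]
    {f : P →ₗ[A] N} {g : M →ₗ[A] N} (h : LinearMap.range f ≤ LinearMap.range g) :
    ∃ l : P →ₗ[A] M, g ∘ₗ l = f := by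
  obtain ⟨l, hl⟩ := Module.projective_lifting_property g.rangeRestrict
    (f.codRestrict (LinearMap.range g) fun x ↦ h ⟨x, rfl⟩) g.surjective_rangeRestrict
  exact ⟨l, LinearMap.ext fun x ↦ congrArg Subtype.val (LinearMap.congr_fun hl x)⟩

variable {A F₀ F₁ G₀ G₁ G₂ : Type*} [Ring A] [AddCommGroup F₀] [AddCommGroup F₁]
  [AddCommGroup G₀] [AddCommGroup G₁] [AddCommGroup G₂] [Module A F₀] [Module A F₁] [Module A G₀]
  [Module A G₁] [Module A G₂]

-- The new homotopy `h` corrects `b' ∘ a' - id - k ∘ ε` on `G₁`, whose values are cycles.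
theorem exists_lift_of_homotopy [Module.Projective A F₁] [Module.Projective A G₁]
    {εF : F₁ →ₗ[A] F₀} {εG : G₁ →ₗ[A] G₀} {δ : G₂ →ₗ[A] G₁}
    (hδ : LinearMap.range δ = LinearMap.ker εG) {a : G₀ →ₗ[A] F₀} {b : F₀ →ₗ[A] G₀}
    {k : G₀ →ₗ[A] G₁} {a' : G₁ →ₗ[A] F₁} (ha : εF ∘ₗ a' = a ∘ₗ εG)
    (hb : LinearMap.range (b ∘ₗ εF) ≤ LinearMap.range εG)
    (hk : ∀ x, b (a (εG x)) - εG x = εG (k (εG x))) :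
    ∃ (b' : F₁ →ₗ[A] G₁) (h : G₁ →ₗ[A] G₂), εG ∘ₗ b' = b ∘ₗ εF ∧
      ∀ x, b' (a' x) - x = k (εG x) + δ (h x) := by
  obtain ⟨b', hb'⟩ := exists_comp_eq_of_range_le hb
  have hcycle : LinearMap.range (b' ∘ₗ a' - LinearMap.id - k ∘ₗ εG) ≤ LinearMap.range δ := by
    rw [hδ]
    rintro _ ⟨x, rfl⟩
    have hab : εG (b' (a' x)) = b (a (εG x)) :=
      (LinearMap.congr_fun hb' (a' x)).trans (congrArg b (LinearMap.congr_fun ha x))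
    simp [hab, hk]
  obtain ⟨h, hh⟩ := exists_comp_eq_of_range_le hcycle
  refine ⟨b', h, hb', fun x ↦ ?_⟩
  have hx : δ (h x) = b' (a' x) - x - k (εG x) := LinearMap.congr_fun hh x
  rw [hx, add_sub_cancel]

theorem constantCoeff_map_apply_eq_zero {σ A ι κ : Type*} [CommSemiring A] [Finite κ]
    (f : (κ → MvPolynomial σ A) →ₗ[MvPolynomial σ A] (ι → MvPolynomial σ A))
    {x : κ → MvPolynomial σ A} (hx : ∀ k, constantCoeff (x k) = 0) (j : ι) :
    constantCoeff (f x j) = 0 := by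
  classical
  have _ := Fintype.ofFinite κ
  rw [linearMap_apply_eq_sum_single f, Finset.sum_apply, map_sum]
  exact sum_eq_zero fun k _ ↦ by rw [Pi.smul_apply, smul_eq_mul, map_mul, hx, zero_mul]

end Comparison

namespace GFR

variable {n : ℕ} {K : Type} [Field K] {I : Ideal (MvPolynomial (Fin n) K)} (F G : GFR n K I)

theorem isGraded_δ (i : ℕ) : IsGraded (F.tw (i + 1)) (F.tw i) (F.δ i) :=
  isGraded_of_apply_single fun k j ↦ shiftedComponent_eq_self_iff.2 (F.δ_homog i k j)

theorem aug_gradedComponent (t : ℕ) (x : Fin (F.rk 0) → MvPolynomial (Fin n) K) :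
    F.aug (gradedComponent (F.tw 0) t x) = homogeneousComponent t (F.aug x) :=
  shiftedComponent_map (e := 0) (fun k ↦ shiftedComponent_eq_self_iff.2
    (Or.inr ⟨Nat.zero_le _, F.aug_homog k⟩)) t x

variable {F G}

theorem IsMinimal.constantCoeff_δ_apply (hG : G.IsMinimal) (i : ℕ)
    (x : Fin (G.rk (i + 1)) → MvPolynomial (Fin n) K) (j : Fin (G.rk i)) :
    constantCoeff (G.δ i x j) = 0 := by
  rw [linearMap_apply_eq_sum_single (G.δ i), Finset.sum_apply, map_sum]
  exact sum_eq_zero fun k _ ↦ by rw [Pi.smul_apply, smul_eq_mul, map_mul, hG, mul_zero]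

/-- Maps in homological degree `i` between two resolutions which are mutually inverse up to
homotopy and, modulo the variables, are inverse on the nose in one direction. Only the map whose
entries are read off later is required to be graded. -/
structure Comparison (F G : GFR n K I) (i : ℕ) where
  toFun : (Fin (G.rk i) → MvPolynomial (Fin n) K) →ₗ[MvPolynomial (Fin n) K]
    (Fin (F.rk i) → MvPolynomial (Fin n) K)
  invFun : (Fin (F.rk i) → MvPolynomial (Fin n) K) →ₗ[MvPolynomial (Fin n) K]
    (Fin (G.rk i) → MvPolynomial (Fin n) K)
  homotopy : (Fin (G.rk i) → MvPolynomial (Fin n) K) →ₗ[MvPolynomial (Fin n) K]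
    (Fin (G.rk (i + 1)) → MvPolynomial (Fin n) K)
  isGraded_toFun : IsGraded (G.tw i) (F.tw i) toFun
  range_toFun : LinearMap.range (toFun ∘ₗ G.δ i) ≤ LinearMap.range (F.δ i)
  range_invFun : LinearMap.range (invFun ∘ₗ F.δ i) ≤ LinearMap.range (G.δ i)
  homotopy_eq : ∀ x, invFun (toFun (G.δ i x)) - G.δ i x = G.δ i (homotopy (G.δ i x))
  constantCoeff_eq_zero : ∀ x j, constantCoeff ((invFun (toFun x) - x) j) = 0

namespace Comparison

theorem nonempty_zero (hG : G.IsMinimal) (hI : ∀ p ∈ I, ∀ t, homogeneousComponent t p ∈ I) :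
    Nonempty (Comparison F G 0) := by
  have hker (H : GFR n K I) : LinearMap.range (H.δ 0) = LinearMap.ker (I.mkQ ∘ₗ H.aug) := by
    rw [LinearMap.ker_comp, Submodule.ker_mkQ, H.exact_zero]
  have hsurj (H : GFR n K I) : LinearMap.range (I.mkQ ∘ₗ H.aug) = ⊤ := by
    rw [LinearMap.range_eq_top]
    intro q
    obtain ⟨r, rfl⟩ := I.mkQ_surjective q
    exact (H.aug_surj r).imp fun x hx ↦ ((Submodule.Quotient.eq I).2 hx).symm
  obtain ⟨a, ha_graded, ha⟩ := exists_isGraded_lift (f := I.mkQ ∘ₗ G.aug) (g := I.mkQ ∘ₗ F.aug)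
    (tw := G.tw 0) (tw' := F.tw 0) (le_top.trans_eq (hsurj F).symm) fun t x y hxy ↦ by
      refine (Submodule.Quotient.eq I).2 ?_
      rw [aug_gradedComponent, aug_gradedComponent, ← map_sub]
      exact hI _ ((Submodule.Quotient.eq I).1 hxy) t
  obtain ⟨b, h, hb, hh⟩ := exists_lift_of_homotopy (a := LinearMap.id) (b := LinearMap.id) (k := 0)
    (hker G) ha (le_top.trans_eq (hsurj G).symm) (by simp)
  have hh' (x) : b (a x) - x = G.δ 0 (h x) := (hh x).trans (zero_add _)
  refine ⟨⟨a, b, h, ha_graded, ?_, ?_, fun x ↦ hh' _, fun x j ↦ ?_⟩⟩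
  · rw [hker F, LinearMap.range_le_ker_iff, ← LinearMap.comp_assoc, ha]
    exact LinearMap.range_le_ker_iff.1 (hker G).le
  · rw [hker G, LinearMap.range_le_ker_iff, ← LinearMap.comp_assoc, hb]
    exact LinearMap.range_le_ker_iff.1 (hker F).le
  · rw [hh']
    exact hG.constantCoeff_δ_apply 0 _ j

theorem nonempty_succ (hG : G.IsMinimal) {i : ℕ} (c : Comparison F G i) :
    Nonempty (Comparison F G (i + 1)) := by
  have hδδ (H : GFR n K I) : H.δ i ∘ₗ H.δ (i + 1) = 0 :=
    LinearMap.range_le_ker_iff.1 (H.exact_succ i).le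
  obtain ⟨a, ha_graded, ha⟩ := exists_isGraded_lift (tw := G.tw (i + 1)) (tw' := F.tw (i + 1))
    c.range_toFun fun t x y hxy ↦ by
      rw [LinearMap.comp_apply, isGraded_δ, isGraded_δ, c.isGraded_toFun, ← hxy]; rfl
  obtain ⟨b, h, hb, hh⟩ := exists_lift_of_homotopy (G.exact_succ i) ha c.range_invFun c.homotopy_eq
  refine ⟨⟨a, b, h, ha_graded, ?_, ?_, fun x ↦ ?_, fun x j ↦ ?_⟩⟩
  · rw [F.exact_succ, LinearMap.range_le_ker_iff, ← LinearMap.comp_assoc, ha, LinearMap.comp_assoc,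
      hδδ, LinearMap.comp_zero]
  · rw [G.exact_succ, LinearMap.range_le_ker_iff, ← LinearMap.comp_assoc, hb, LinearMap.comp_assoc,
      hδδ, LinearMap.comp_zero]
  · have hx : G.δ i (G.δ (i + 1) x) = 0 := LinearMap.congr_fun (hδδ G) x
    rw [hh, hx, map_zero, zero_add]
  · rw [hh, Pi.add_apply, map_add, hG.constantCoeff_δ_apply,
      constantCoeff_map_apply_eq_zero _ (hG.constantCoeff_δ_apply i x), add_zero]

end Comparison

theorem nonempty_comparison (hG : G.IsMinimal)
    (hI : ∀ p ∈ I, ∀ t, homogeneousComponent t p ∈ I) (i : ℕ) : Nonempty (Comparison F G i) := by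
  induction i with
  | zero => exact Comparison.nonempty_zero hG hI
  | succ i ih => exact ih.elim (Comparison.nonempty_succ hG)

theorem IsMinimal.exists_tw_eq (hG : G.IsMinimal)
    (hI : ∀ p ∈ I, ∀ t, homogeneousComponent t p ∈ I) (F : GFR n K I) (i : ℕ) (k : Fin (G.rk i)) :
    ∃ j, F.tw i j = G.tw i k := by
  obtain ⟨c⟩ := nonempty_comparison (F := F) hG hI i
  suffices ∃ j, constantCoeff (c.toFun (Pi.single k 1) j) ≠ 0 from
    this.imp fun j hj ↦ c.isGraded_toFun.eq_of_constantCoeff_ne_zero hj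
  by_contra! h
  have h0 := constantCoeff_map_apply_eq_zero c.invFun h k
  have h1 := c.constantCoeff_eq_zero (Pi.single k 1) k
  simp [h0] at h1

end GFR

section Invariants

variable {n : ℕ} {K : Type} [Field K] {U : UpperSet (Finset (Fin n))}
  {s : Fin n → Finset (Fin n) → K}

theorem exists_gfr_forall_tw_iff (hs : IsSign s) (hU : ∅ ∉ U) {p : ℕ → ℕ → Prop} :
    (∃ F : GFR n K (sqfreeIdeal K U), ∀ i k, p i (F.tw i k)) ↔
      p 0 0 ∧ ∀ (i : ℕ) (σ : Finset (Fin n)),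
        ¬ CubeExactAt s (constOn K K U) (Set.Iic σ) (#σ - i) → p (i + 1) #σ := by
  let G := sqfreeResolution K U hU
  trans ∀ i k, p i (G.tw i k)
  · refine ⟨fun ⟨F, hF⟩ i k ↦ ?_, fun h ↦ ⟨G, h⟩⟩
    obtain ⟨j, hj⟩ := GFR.isMinimal_sqfreeResolution.exists_tw_eq
      (fun _ ↦ homogeneousComponent_mem_sqfreeIdeal) F i k
    exact hj ▸ hF i j
  · rw [← Nat.and_forall_add_one]
    refine and_congr GFR.forall_tw_zero_sqfreeResolution_iff (forall_congr' fun i ↦ ?_)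
    refine ⟨fun h σ hσ ↦ ?_, fun h k ↦ ?_⟩
    · obtain ⟨k, hk⟩ := (GFR.exists_tw_sqfreeResolution_eq_iff hs).2 ⟨σ, rfl, hσ⟩
      exact hk ▸ h k
    · obtain ⟨σ, hσk, hσ⟩ := (GFR.exists_tw_sqfreeResolution_eq_iff hs).1 ⟨k, rfl⟩
      exact hσk ▸ h σ hσ

theorem regR_sqfreeIdeal (hs : IsSign s) (hU : ∅ ∉ U) :
    regR (sqfreeIdeal K U) = sInf {r : ℕ | ∀ (σ : Finset (Fin n)) (j : ℤ), ↑(r + 1) < j →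
      CubeExactAt s (constOn K K U) (Set.Iic σ) j} := by
  refine congrArg sInf (Set.ext fun r ↦
    (exists_gfr_forall_tw_iff hs hU (p := fun i t ↦ t ≤ r + i)).trans ?_)
  refine ⟨fun ⟨_, h⟩ σ j _ ↦ ?_, fun h ↦ ⟨Nat.zero_le _, fun i σ hσ ↦ ?_⟩⟩
  · obtain _ | _ := lt_or_ge (#σ : ℤ) j
    · exact cubeExactAt_of_card_ne fun γ hγ ↦ by have := card_le_card hγ; lia
    · by_contra hσ
      have := h (#σ - j).toNat σ (by rwa [Int.toNat_of_nonneg (by lia), sub_sub_cancel])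
      lia
  · by_contra _
    exact hσ (h _ _ (by lia))

theorem pdR_sqfreeIdeal (hs : IsSign s) (hU : ∅ ∉ U) :
    pdR (sqfreeIdeal K U) = sInf {d : ℕ | ∀ (σ : Finset (Fin n)) (i : ℕ), d ≤ i →
      CubeExactAt s (constOn K K U) (Set.Iic σ) (#σ - i)} := by
  refine congrArg sInf (Set.ext fun d ↦ ?_)
  trans ∃ F : GFR n K (sqfreeIdeal K U), ∀ i, Fin (F.rk i) → i ≤ d
  · exact exists_congr fun F ↦ forall_congr' fun i ↦
      ⟨fun h k ↦ not_lt.1 fun hi ↦ (Fin.cast (h hi) k).elim0,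
        fun h hi ↦ Nat.eq_zero_of_not_pos fun hpos ↦ (h ⟨0, hpos⟩).not_gt hi⟩
  · refine (exists_gfr_forall_tw_iff hs hU (p := fun i _ ↦ i ≤ d)).trans ?_
    rw [forall_comm, and_iff_right d.zero_le]
    exact forall₂_congr fun σ i ↦ by rw [not_imp_comm, not_le, Nat.lt_succ_iff]

theorem exists_not_cubeExactAt_card (hs : IsSign s) (h_bot : ∅ ∉ U) (h_top : univ ∈ U) :
    ∃ σ : Finset (Fin n), 0 < #σ ∧ ¬ CubeExactAt s (constOn K K U) (Set.Iic σ) #σ := by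
  obtain ⟨σ, hσ⟩ := (Set.toFinite (U : Set (Finset (Fin n)))).exists_minimal ⟨univ, h_top⟩
  have hN : Monotone (constOn K K (U : Set (Finset (Fin n)))) := constOn_mono U.upper
  have hrad : rad (constOn K K U) σ = ⊥ := iSup₂_eq_bot.2 fun v hv ↦
    constOn_of_notMem fun h ↦ hσ.not_prop_of_lt (erase_ssubset hv) h
  refine ⟨σ, card_pos.2 (nonempty_iff_ne_empty.2 fun h ↦ h_bot (h ▸ hσ.prop)), ?_⟩
  rw [cubeExactAt_card_iff hs hN, hrad, constOn_of_mem hσ.prop]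
  simp

theorem pdR_alexanderDual (h_bot : ∅ ∉ U) (h_top : univ ∈ U) :
    pdR (sqfreeIdeal K (alexanderDual U)) = regR (sqfreeIdeal K U) + 1 := by
  have hs := isSign_standardSign (V := Fin n) K
  have hdual : ∅ ∉ alexanderDual U := fun h ↦ mem_alexanderDual.1 h (by rwa [compl_empty])
  rw [regR_sqfreeIdeal hs h_bot, pdR_sqfreeIdeal (isSign_dualSign hs) hdual,
    Nat.sInf_add (p := fun d : ℕ ↦ ∀ (σ : Finset (Fin n)) (j : ℤ), d < j →
      CubeExactAt (standardSign K) (constOn K K U) (Set.Iic σ) j)]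
  · simp only [forall_cubeExactAt_alexanderDual_iff hs h_top]
  · refine le_csInf ⟨Fintype.card (Fin n), fun σ j ↦ cubeExactAt_of_card_lt⟩ fun d hd ↦ ?_
    obtain ⟨σ, hσ_pos, hσ⟩ := exists_not_cubeExactAt_card hs h_bot h_top
    by_contra hd0
    exact hσ (hd σ #σ (by lia))

end Invariants

section EdgeIdeal

variable {n : ℕ} {K : Type} [Field K]

theorem edgeMonomial_eq_monomial : edgeMonomial K =
    fun e : Finset (Fin n) ↦ monomial (sqfreeExponent e) (1 : K) :=
  funext fun e ↦ by rw [sqfreeExponent, monomial_sum_one]; rfl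

namespace Clutter

variable (C : Clutter n) (K)

theorem edgeIdeal_eq_sqfreeIdeal : C.edgeIdeal K = sqfreeIdeal K (upperClosure C.edges) := by
  ext p
  rw [edgeIdeal, edgeMonomial_eq_monomial, mem_span_sqfree_iff, mem_sqfreeIdeal]

theorem coe_alexanderDual_upperClosure_edges :
    (↑(alexanderDual (upperClosure (C.edges : Set (Finset (Fin n))))) : Set (Finset (Fin n))) =
      {S | C.IsVertexCover S} := by
  ext S
  simp only [SetLike.mem_coe, mem_alexanderDual, mem_upperClosure, not_exists, not_and]
  exact forall₂_congr fun e _ ↦ by simp [subset_iff]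

theorem coverIdeal_eq_sqfreeIdeal :
    C.coverIdeal K = sqfreeIdeal K (alexanderDual (upperClosure C.edges)) := by
  rw [coverIdeal, sqfreeIdeal, edgeMonomial_eq_monomial, coe_alexanderDual_upperClosure_edges]

end Clutter

theorem idealHeight_bot {A : Type} [CommRing A] [IsDomain A] : idealHeight (⊥ : Ideal A) = 0 := by
  refine le_antisymm (iInf₂_le_of_le ⊥ bot_le ?_) bot_le
  exact (Order.height_eq_zero.2 isMin_bot).le

theorem idealHeight_top {A : Type} [CommRing A] : idealHeight (⊤ : Ideal A) = ⊤ :=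
  iInf₂_eq_top.2 fun p hp ↦ (p.isPrime.ne_top (top_le_iff.1 hp)).elim

end EdgeIdeal

theorem stmt_0_general (K : Type) [Field K] {n : ℕ} (C : Clutter n) (h_bot : C.edgeIdeal K ≠ ⊥)
    (h_top : C.edgeIdeal K ≠ ⊤) : pdR (C.coverIdeal K) = regR (C.edgeIdeal K) + 1 := by
  rw [C.edgeIdeal_eq_sqfreeIdeal K] at h_bot h_top ⊢
  rw [C.coverIdeal_eq_sqfreeIdeal K]
  exact pdR_alexanderDual (mt sqfreeIdeal_eq_top h_top) (not_not.1 (mt sqfreeIdeal_eq_bot h_bot))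

/-- If the edge ideal of a clutter has height one, then
`reg(R/I(C)) = pd(R/I_c(C)) - 1`. -/
theorem stmt_0 (K : Type) [Field K] {n : ℕ} (C : Clutter n)
    (h : idealHeight (C.edgeIdeal K) = 1) :
    regR (C.edgeIdeal K) = pdR (C.coverIdeal K) - 1 := by
  rw [stmt_0_general K C (fun h_bot ↦ by simp [h_bot, idealHeight_bot] at h)
    (fun h_top ↦ by simp [h_top, idealHeight_top] at h), Nat.add_sub_cancel]
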